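/- Let n ≥ 0, let κ = (κ_1,…,κ_ℓ) ∈ Z^ℓ be a multicharge, and let e be an integer with e > max{n + κ_k − κ_l : 1 ≤ k,l ≤ ℓ}. Let K be a field containing an invertible element ξ_0 that is not a root of unity and an invertible element ξ_e that is a primitive e-th root of unity. Then the cyclotomic Hecke algebras H_n(K, ξ_0, κ) and H_n(K, ξ_e, κ) are isomorphic as K-algebras. -/

import Mathlib

open scoped BigOperators
open scoped Classical

namespace Paper

/-! ## Quantum integers -/

/-- The quantum integer `[d]_x` in a field, for `d ∈ ℤ`. -/
noncomputable def qint {K : Type*} [Field K] (x : K) (d : ℤ) : K :=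
  if 0 ≤ d then ∑ k ∈ Finset.range d.toNat, x ^ k
  else -∑ k ∈ Finset.range (-d).toNat, x ^ (-((k : ℤ) + 1))

/-- The quantum integer `[d]_t` in a commutative ring, for an invertible `t` and `d ∈ ℤ`. -/
def qintU {O : Type*} [CommRing O] (t : Oˣ) (d : ℤ) : O :=
  if 0 ≤ d then ∑ k ∈ Finset.range d.toNat, (t : O) ^ k
  else -∑ k ∈ Finset.range (-d).toNat, ((t ^ (-((k : ℤ) + 1)) : Oˣ) : O)

/-! ## Nodes, multipartitions and standard tableaux -/

/-- A node `(l, r, c)`: component `l`, row `r`, column `c` (all `0`-based). -/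
abbrev Node : Type := ℕ × ℕ × ℕ

/-- `nodeBelow A B` holds when `B` is strictly below `A`, i.e. `A < B` lexicographically. -/
def nodeBelow (A B : Node) : Prop :=
  A.1 < B.1 ∨ (A.1 = B.1 ∧ (A.2.1 < B.2.1 ∨ (A.2.1 = B.2.1 ∧ A.2.2 < B.2.2)))

/-- An `ℓ`-multipartition of `n`. -/
structure Multipartition (ℓ n : ℕ) : Type where
  part : ℕ → ℕ → ℕ
  comp_bound : ∀ l, ℓ ≤ l → ∀ r, part l r = 0
  antitone : ∀ l, Antitone (part l)
  row_bound : ∀ l r, n ≤ r → part l r = 0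
  size : (∑ l ∈ Finset.range ℓ, ∑ r ∈ Finset.range n, part l r) = n

/-- The diagram of a multipartition. -/
def Multipartition.diagram {ℓ n : ℕ} (μ : Multipartition ℓ n) : Set Node :=
  {A | A.2.2 < μ.part A.1 A.2.1}

/-- A standard tableau: a bijection from the diagram of its shape onto `{1, …, n}`
that increases along rows and down columns of each component (it takes the value
`0` off the diagram, so that it is determined by its entries). -/
structure StdTableau (ℓ n : ℕ) : Type where
  shape : Multipartition ℓ n
  entry : Node → ℕ
  entry_zero : ∀ A, A ∉ shape.diagram → entry A = 0
  bijOn : Set.BijOn entry shape.diagram (Set.Icc 1 n)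
  row_inc : ∀ l r c, (l, r, c + 1) ∈ shape.diagram → entry (l, r, c) < entry (l, r, c + 1)
  col_inc : ∀ l r c, (l, r + 1, c) ∈ shape.diagram → entry (l, r, c) < entry (l, r + 1, c)

/-- The node of a standard tableau containing the entry `k`. -/
noncomputable def StdTableau.node {ℓ n : ℕ} (T : StdTableau ℓ n) (k : ℕ) : Node :=
  Function.invFunOn T.entry T.shape.diagram k

/-- The content `c_k(T) = κ_l + c - r` of the entry `k` in the tableau `T`
(`1 ≤ k ≤ n`). -/
noncomputable def content {ℓ n : ℕ} (κ : ℕ → ℤ) (T : StdTableau ℓ n) (k : ℕ) : ℤ :=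
  κ (T.node k).1 + ((T.node k).2.2 : ℤ) - ((T.node k).2.1 : ℤ)

/-- The residue sequence of a standard tableau, in `I^n` with `I = ℤ/eℤ`. -/
noncomputable def resSeq {ℓ n : ℕ} (e : ℕ) (κ : ℕ → ℤ) (T : StdTableau ℓ n) :
    Fin n → ZMod e :=
  fun k => ((content κ T (k.1 + 1) : ℤ) : ZMod e)

/-- The residue of a node. -/
def resNode (e : ℕ) (κ : ℕ → ℤ) (A : Node) : ZMod e :=
  ((κ A.1 + (A.2.2 : ℤ) - (A.2.1 : ℤ) : ℤ) : ZMod e)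

/-- A set of nodes is the diagram of a multipartition (with at most `ℓ` components)
iff it is finite and downward closed in rows and columns. -/
def IsDiagramSet (ℓ : ℕ) (S : Set Node) : Prop :=
  S.Finite ∧ (∀ A ∈ S, A.1 < ℓ) ∧
    (∀ l r c, (l, r, c + 1) ∈ S → (l, r, c) ∈ S) ∧
    (∀ l r c, (l, r + 1, c) ∈ S → (l, r, c) ∈ S)

/-- `A` is an addable node of the diagram `S`. -/
def Addable (ℓ : ℕ) (S : Set Node) (A : Node) : Prop :=
  A ∉ S ∧ IsDiagramSet ℓ (S ∪ {A})

/-- `A` is a removable node of the diagram `S`. -/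
def Removable (ℓ : ℕ) (S : Set Node) (A : Node) : Prop :=
  A ∈ S ∧ IsDiagramSet ℓ (S \ {A})

/-- `d_A(S)`: the number of addable nodes of `S` of the same residue as `A` strictly
below `A`, minus the number of removable ones. -/
noncomputable def dNode (ℓ e : ℕ) (κ : ℕ → ℤ) (S : Set Node) (A : Node) : ℤ :=
  (Set.ncard {B | Addable ℓ S B ∧ resNode e κ B = resNode e κ A ∧ nodeBelow A B} : ℤ) -
    (Set.ncard {B | Removable ℓ S B ∧ resNode e κ B = resNode e κ A ∧ nodeBelow A B} : ℤ)

/-- The Brundan–Kleshchev–Wang degree `deg_e(T)` of a standard tableau, written as the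
telescoping sum of the recursion `deg_e(T) = deg_e(T↓(n-1)) + d_A(Shape(T))`. -/
noncomputable def degE {ℓ n : ℕ} (e : ℕ) (κ : ℕ → ℤ) (T : StdTableau ℓ n) : ℤ :=
  ∑ m ∈ Finset.Icc 1 n,
    dNode ℓ e κ {A | A ∈ T.shape.diagram ∧ T.entry A ≤ m} (T.node m)

/-- The restriction of the diagram of `T` to entries `≤ m` (the diagram of `Shape(T↓m)`). -/
def restDiag {ℓ n : ℕ} (T : StdTableau ℓ n) (m : ℕ) : Set Node :=
  {A | A ∈ T.shape.diagram ∧ T.entry A ≤ m}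

/-- Dominance order on standard tableaux: `domTab S T` iff `S ⊵ T`. -/
def domTab {ℓ n : ℕ} (S T : StdTableau ℓ n) : Prop :=
  ∀ m l i : ℕ,
    Set.ncard {A | A ∈ restDiag T m ∧ (A.1 < l ∨ (A.1 = l ∧ A.2.1 ≤ i))} ≤
      Set.ncard {A | A ∈ restDiag S m ∧ (A.1 < l ∨ (A.1 = l ∧ A.2.1 ≤ i))}

/-- Interchange the entries `r` and `r + 1` in an entry function. -/
def swapEntry (f : Node → ℕ) (r : ℕ) : Node → ℕ :=
  fun A => if f A = r then r + 1 else if f A = r + 1 then r else f A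

/-- `ρ_r(T) = c_r(T) - c_{r+1}(T)`, the axial distance. -/
noncomputable def rhoTab {ℓ n : ℕ} (κ : ℕ → ℤ) (T : StdTableau ℓ n) (r : ℕ) : ℤ :=
  content κ T r - content κ T (r + 1)

/-- The entry function of the row-reading initial tableau `t^λ`. -/
noncomputable def tlamEntry {ℓ n : ℕ} (μ : Multipartition ℓ n) (A : Node) : ℕ :=
  if A ∈ μ.diagram then
    (∑ l ∈ Finset.range A.1, ∑ r ∈ Finset.range n, μ.part l r) +
      (∑ r ∈ Finset.range A.2.1, μ.part A.1 r) + A.2.2 + 1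
  else 0

/-- The finite set of possible contents of standard tableaux of size `n`. -/
noncomputable def contFinset (ℓ n : ℕ) (κ : ℕ → ℤ) : Finset ℤ :=
  ((Finset.range ℓ ×ˢ Finset.range n ×ˢ Finset.range n).image
      (fun x => κ x.1 + (x.2.2 : ℤ) - (x.2.1 : ℤ))).filter
    (fun c => ∃ T : StdTableau ℓ n, ∃ k, 1 ≤ k ∧ k ≤ n ∧ content κ T k = c)

/-- The standard tableau (if any) obtained from `T` by interchanging the entries
`r` and `r + 1`; i.e. `T·s_r` if it is standard, and `none` otherwise. -/
noncomputable def oSwapO {ℓ n : ℕ} (T : StdTableau ℓ n) (r : ℕ) :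
    Option (StdTableau ℓ n) :=
  if h : ∃ V : StdTableau ℓ n, V.entry = swapEntry T.entry r then some (Classical.choose h)
  else none

/-- `oSwap` extended to `Option`. -/
noncomputable def oSwap {ℓ n : ℕ} (X : Option (StdTableau ℓ n)) (r : ℕ) :
    Option (StdTableau ℓ n) :=
  X.bind fun T => oSwapO T r

/-- Evaluate a seminormal coefficient system on an optional tableau (by `0` if none). -/
noncomputable def aE {ℓ n : ℕ} {K : Type*} [Field K] (α : ℕ → StdTableau ℓ n → K) (r : ℕ)
    (X : Option (StdTableau ℓ n)) : K :=
  X.elim 0 (α r)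

/-! ## Separation and idempotent subrings -/

/-- `(K, t)` separates `Std(P_n)` (field version):
`[n]!_t ∏_{1 ≤ l < m ≤ ℓ} ∏_{-n < d < n} [κ_l - κ_m + d]_t ≠ 0`. -/
def SeparatesF {K : Type*} [Field K] (t : Kˣ) (n ℓ : ℕ) (κ : ℕ → ℤ) : Prop :=
  ((∏ d ∈ Finset.Icc 1 n, qint (t : K) (d : ℤ)) *
      ∏ l ∈ Finset.range ℓ, ∏ m ∈ Finset.Ioo l ℓ,
        ∏ d ∈ Finset.Ioo (-(n : ℤ)) (n : ℤ), qint (t : K) (κ l - κ m + d)) ≠ 0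

/-- `(O, t)` separates `Std(P_n)` (subring version): the separation element is a unit. -/
def SeparatesU {O : Type*} [CommRing O] (t : Oˣ) (n ℓ : ℕ) (κ : ℕ → ℤ) : Prop :=
  IsUnit ((∏ d ∈ Finset.Icc 1 n, qintU t (d : ℤ)) *
      ∏ l ∈ Finset.range ℓ, ∏ m ∈ Finset.Ioo l ℓ,
        ∏ d ∈ Finset.Ioo (-(n : ℤ)) (n : ℤ), qintU t (κ l - κ m + d))

/-- `(O, t)` is an `e`-idempotent subring of the field `K`. -/
def IsIdempotentSubring {K : Type*} [Field K] (O : Subring K) (t : Oˣ) (e n ℓ : ℕ)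
    (κ : ℕ → ℤ) : Prop :=
  SeparatesU t n ℓ κ ∧
    (∀ k : ℤ, ¬(e : ℤ) ∣ k → IsUnit (qintU t k)) ∧
    (∀ k : ℤ, (e : ℤ) ∣ k → qintU t k ∈ Ideal.jacobson (⊥ : Ideal O))

/-! ## The cyclotomic Hecke algebra, by generators and relations -/

/-- Generators `L_1, …, L_n`, `T_1, …, T_{n-1}` (here `0`-based). -/
inductive HeckeGen (n : ℕ) : Type
  | L : Fin n → HeckeGen n
  | T : Fin (n - 1) → HeckeGen n

/-- The position `r` of the pair `(r, r+1)` interchanged by the `r`-th transposition. -/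
def pL {n : ℕ} (r : Fin (n - 1)) : Fin n := ⟨r.1, by have := r.2; omega⟩

/-- The position `r + 1` of the pair interchanged by the `r`-th transposition. -/
def pR {n : ℕ} (r : Fin (n - 1)) : Fin n := ⟨r.1 + 1, by have := r.2; omega⟩

/-- The position `r + 2`, used in braid relations. -/
def pM {n : ℕ} (r : Fin (n - 1)) (hr : r.1 + 1 < n - 1) : Fin n := ⟨r.1 + 2, by omega⟩

/-- The free algebra generator `L_k`. -/
def hL (R : Type*) [CommRing R] {n : ℕ} (k : Fin n) : FreeAlgebra R (HeckeGen n) :=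
  FreeAlgebra.ι R (HeckeGen.L k)

/-- The free algebra generator `T_r`. -/
def hT (R : Type*) [CommRing R] {n : ℕ} (r : Fin (n - 1)) : FreeAlgebra R (HeckeGen n) :=
  FreeAlgebra.ι R (HeckeGen.T r)

/-- The defining relations of the integral cyclotomic Hecke algebra `H_n(R, t, κ)`. -/
inductive HeckeRel (R : Type*) [CommRing R] (t : Rˣ) (n ℓ : ℕ) (κ : ℕ → ℤ) :
    FreeAlgebra R (HeckeGen n) → FreeAlgebra R (HeckeGen n) → Prop
  | cyc (h : 0 < n) :
      HeckeRel R t n ℓ κ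
        (((List.range ℓ).map fun l =>
          hL R (⟨0, h⟩ : Fin n) - algebraMap R _ (qintU t (κ l))).prod) 0
  | quad (r : Fin (n - 1)) :
      HeckeRel R t n ℓ κ ((hT R r + 1) * (hT R r - algebraMap R _ (t : R))) 0
  | LL (k m : Fin n) : HeckeRel R t n ℓ κ (hL R k * hL R m) (hL R m * hL R k)
  | TTfar (r s : Fin (n - 1)) (h : r.1 + 1 < s.1 ∨ s.1 + 1 < r.1) :
      HeckeRel R t n ℓ κ (hT R r * hT R s) (hT R s * hT R r)
  | braid (r s : Fin (n - 1)) (h : s.1 = r.1 + 1) :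
      HeckeRel R t n ℓ κ (hT R r * hT R s * hT R r) (hT R s * hT R r * hT R s)
  | TL (r : Fin (n - 1)) (k : Fin n) (h : k.1 ≠ r.1 ∧ k.1 ≠ r.1 + 1) :
      HeckeRel R t n ℓ κ (hT R r * hL R k) (hL R k * hT R r)
  | LT (r : Fin (n - 1)) :
      HeckeRel R t n ℓ κ (hL R (pR r) * (hT R r - algebraMap R _ (t : R) + 1))
        (hT R r * hL R (pL r) + 1)

/-- The integral cyclotomic Hecke algebra of type `A`, `H_n(R, t, κ)`. -/
noncomputable abbrev CycHecke (R : Type*) [CommRing R] (t : Rˣ) (n ℓ : ℕ) (κ : ℕ → ℤ) :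
    Type _ :=
  RingQuot (HeckeRel R t n ℓ κ)

/-- The generator `L_k` of the cyclotomic Hecke algebra. -/
noncomputable def Lgen (R : Type*) [CommRing R] (t : Rˣ) (n ℓ : ℕ) (κ : ℕ → ℤ)
    (k : Fin n) : CycHecke R t n ℓ κ :=
  RingQuot.mkAlgHom R (HeckeRel R t n ℓ κ) (hL R k)

/-- The generator `T_r` of the cyclotomic Hecke algebra. -/
noncomputable def Tgen (R : Type*) [CommRing R] (t : Rˣ) (n ℓ : ℕ) (κ : ℕ → ℤ)
    (r : Fin (n - 1)) : CycHecke R t n ℓ κ :=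
  RingQuot.mkAlgHom R (HeckeRel R t n ℓ κ) (hT R r)

end Paper
/-! ## Quiver Hecke (KLR) algebras, by generators and relations -/

namespace Paper

/-- Generators `e(i)` (`i ∈ I^n`), `ψ_1, …, ψ_{n-1}`, `y_1, …, y_n` (here `0`-based). -/
inductive KLRGen (n e : ℕ) : Type
  | idem : (Fin n → ZMod e) → KLRGen n e
  | psi : Fin (n - 1) → KLRGen n e
  | y : Fin n → KLRGen n e

/-- The free algebra generator `e(i)`. -/
def kE (R : Type*) [CommRing R] {n e : ℕ} (i : Fin n → ZMod e) :
    FreeAlgebra R (KLRGen n e) :=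
  FreeAlgebra.ι R (KLRGen.idem i)

/-- The free algebra generator `ψ_r`. -/
def kPsi (R : Type*) [CommRing R] {n e : ℕ} (r : Fin (n - 1)) :
    FreeAlgebra R (KLRGen n e) :=
  FreeAlgebra.ι R (KLRGen.psi r)

/-- The free algebra generator `y_k`. -/
def kY (R : Type*) [CommRing R] {n e : ℕ} (k : Fin n) : FreeAlgebra R (KLRGen n e) :=
  FreeAlgebra.ι R (KLRGen.y k)

/-- `s_r · i`: interchange the entries of `i` at positions `r` and `r + 1`. -/
def swapSeq {n e : ℕ} (i : Fin n → ZMod e) (r : Fin (n - 1)) : Fin n → ZMod e :=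
  fun k => if k = pL r then i (pR r) else if k = pR r then i (pL r) else i k

/-- The defining relations of the cyclotomic quiver Hecke algebra `R_n^Λ(R)` where
`Λ = Σ_l Λ_{κ_l mod e}`. -/
inductive KLRRel (R : Type*) [CommRing R] (n e ℓ : ℕ) [NeZero e] (κ : ℕ → ℤ) :
    FreeAlgebra R (KLRGen n e) → FreeAlgebra R (KLRGen n e) → Prop
  | cyc (h : 0 < n) (i : Fin n → ZMod e) :
      KLRRel R n e ℓ κ
        ((kY R (⟨0, h⟩ : Fin n)) ^
            (((Finset.range ℓ).filter fun l => ((κ l : ZMod e) = i ⟨0, h⟩)).card) *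
          kE R i) 0
  | orth (i j : Fin n → ZMod e) (h : i ≠ j) : KLRRel R n e ℓ κ (kE R i * kE R j) 0
  | idem (i : Fin n → ZMod e) : KLRRel R n e ℓ κ (kE R i * kE R i) (kE R i)
  | complete : KLRRel R n e ℓ κ (∑ i : Fin n → ZMod e, kE R i) 1
  | yE (k : Fin n) (i : Fin n → ZMod e) :
      KLRRel R n e ℓ κ (kY R k * kE R i) (kE R i * kY R k)
  | psiE (r : Fin (n - 1)) (i : Fin n → ZMod e) :
      KLRRel R n e ℓ κ (kPsi R r * kE R i) (kE R (swapSeq i r) * kPsi R r)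
  | yy (k m : Fin n) : KLRRel R n e ℓ κ (kY R k * kY R m) (kY R m * kY R k)
  | psiyEq (r : Fin (n - 1)) (i : Fin n → ZMod e) (h : i (pL r) = i (pR r)) :
      KLRRel R n e ℓ κ (kPsi R r * kY R (pR r) * kE R i)
        ((kY R (pL r) * kPsi R r + 1) * kE R i)
  | psiyNe (r : Fin (n - 1)) (i : Fin n → ZMod e) (h : i (pL r) ≠ i (pR r)) :
      KLRRel R n e ℓ κ (kPsi R r * kY R (pR r) * kE R i)
        (kY R (pL r) * kPsi R r * kE R i)
  | ypsiEq (r : Fin (n - 1)) (i : Fin n → ZMod e) (h : i (pL r) = i (pR r)) :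
      KLRRel R n e ℓ κ (kY R (pR r) * kPsi R r * kE R i)
        ((kPsi R r * kY R (pL r) + 1) * kE R i)
  | ypsiNe (r : Fin (n - 1)) (i : Fin n → ZMod e) (h : i (pL r) ≠ i (pR r)) :
      KLRRel R n e ℓ κ (kY R (pR r) * kPsi R r * kE R i)
        (kPsi R r * kY R (pL r) * kE R i)
  | psiyFar (r : Fin (n - 1)) (k : Fin n) (h : k.1 ≠ r.1 ∧ k.1 ≠ r.1 + 1) :
      KLRRel R n e ℓ κ (kPsi R r * kY R k) (kY R k * kPsi R r)
  | psipsiFar (r s : Fin (n - 1)) (h : r.1 + 1 < s.1 ∨ s.1 + 1 < r.1) :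
      KLRRel R n e ℓ κ (kPsi R r * kPsi R s) (kPsi R s * kPsi R r)
  | quadEq (r : Fin (n - 1)) (i : Fin n → ZMod e) (h : i (pL r) = i (pR r)) :
      KLRRel R n e ℓ κ (kPsi R r ^ 2 * kE R i) 0
  | quadR (r : Fin (n - 1)) (i : Fin n → ZMod e)
      (h1 : i (pR r) = i (pL r) + 1) (h2 : i (pL r) ≠ i (pR r) + 1) :
      KLRRel R n e ℓ κ (kPsi R r ^ 2 * kE R i) ((kY R (pL r) - kY R (pR r)) * kE R i)
  | quadL (r : Fin (n - 1)) (i : Fin n → ZMod e)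
      (h1 : i (pL r) = i (pR r) + 1) (h2 : i (pR r) ≠ i (pL r) + 1) :
      KLRRel R n e ℓ κ (kPsi R r ^ 2 * kE R i) ((kY R (pR r) - kY R (pL r)) * kE R i)
  | quadBoth (r : Fin (n - 1)) (i : Fin n → ZMod e)
      (h1 : i (pR r) = i (pL r) + 1) (h2 : i (pL r) = i (pR r) + 1) :
      KLRRel R n e ℓ κ (kPsi R r ^ 2 * kE R i)
        ((kY R (pR r) - kY R (pL r)) * (kY R (pL r) - kY R (pR r)) * kE R i)
  | quadNone (r : Fin (n - 1)) (i : Fin n → ZMod e) (h1 : i (pL r) ≠ i (pR r))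
      (h2 : i (pR r) ≠ i (pL r) + 1) (h3 : i (pL r) ≠ i (pR r) + 1) :
      KLRRel R n e ℓ κ (kPsi R r ^ 2 * kE R i) (kE R i)
  | braidR (r : Fin (n - 1)) (hr : r.1 + 1 < n - 1) (i : Fin n → ZMod e)
      (h0 : i (pM r hr) = i (pL r)) (h1 : i (pR r) = i (pL r) + 1)
      (h2 : i (pL r) ≠ i (pR r) + 1) :
      KLRRel R n e ℓ κ (kPsi R r * kPsi R ⟨r.1 + 1, hr⟩ * kPsi R r * kE R i)
        ((kPsi R ⟨r.1 + 1, hr⟩ * kPsi R r * kPsi R ⟨r.1 + 1, hr⟩ - 1) * kE R i)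
  | braidL (r : Fin (n - 1)) (hr : r.1 + 1 < n - 1) (i : Fin n → ZMod e)
      (h0 : i (pM r hr) = i (pL r)) (h1 : i (pL r) = i (pR r) + 1)
      (h2 : i (pR r) ≠ i (pL r) + 1) :
      KLRRel R n e ℓ κ (kPsi R r * kPsi R ⟨r.1 + 1, hr⟩ * kPsi R r * kE R i)
        ((kPsi R ⟨r.1 + 1, hr⟩ * kPsi R r * kPsi R ⟨r.1 + 1, hr⟩ + 1) * kE R i)
  | braidBoth (r : Fin (n - 1)) (hr : r.1 + 1 < n - 1) (i : Fin n → ZMod e)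
      (h0 : i (pM r hr) = i (pL r)) (h1 : i (pR r) = i (pL r) + 1)
      (h2 : i (pL r) = i (pR r) + 1) :
      KLRRel R n e ℓ κ (kPsi R r * kPsi R ⟨r.1 + 1, hr⟩ * kPsi R r * kE R i)
        ((kPsi R ⟨r.1 + 1, hr⟩ * kPsi R r * kPsi R ⟨r.1 + 1, hr⟩ +
            kY R (pL r) - 2 * kY R (pR r) + kY R (pM r hr)) * kE R i)
  | braidNone (r : Fin (n - 1)) (hr : r.1 + 1 < n - 1) (i : Fin n → ZMod e)
      (h : ¬(i (pM r hr) = i (pL r) ∧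
        (i (pR r) = i (pL r) + 1 ∨ i (pL r) = i (pR r) + 1))) :
      KLRRel R n e ℓ κ (kPsi R r * kPsi R ⟨r.1 + 1, hr⟩ * kPsi R r * kE R i)
        (kPsi R ⟨r.1 + 1, hr⟩ * kPsi R r * kPsi R ⟨r.1 + 1, hr⟩ * kE R i)

/-- The cyclotomic quiver Hecke algebra `R_n^Λ(R)`, `Λ = Σ_l Λ_{κ_l mod e}`. -/
noncomputable abbrev KLR (R : Type*) [CommRing R] (n e ℓ : ℕ) [NeZero e] (κ : ℕ → ℤ) :
    Type _ :=
  RingQuot (KLRRel R n e ℓ κ)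

/-- The generator `e(i)` of the cyclotomic quiver Hecke algebra. -/
noncomputable def KeGen (R : Type*) [CommRing R] (n e ℓ : ℕ) [NeZero e] (κ : ℕ → ℤ)
    (i : Fin n → ZMod e) : KLR R n e ℓ κ :=
  RingQuot.mkAlgHom R (KLRRel R n e ℓ κ) (kE R i)

/-- The generator `ψ_r` of the cyclotomic quiver Hecke algebra. -/
noncomputable def KpsiGen (R : Type*) [CommRing R] (n e ℓ : ℕ) [NeZero e] (κ : ℕ → ℤ)
    (r : Fin (n - 1)) : KLR R n e ℓ κ :=
  RingQuot.mkAlgHom R (KLRRel R n e ℓ κ) (kPsi R r)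

/-- The generator `y_k` of the cyclotomic quiver Hecke algebra. -/
noncomputable def KyGen (R : Type*) [CommRing R] (n e ℓ : ℕ) [NeZero e] (κ : ℕ → ℤ)
    (k : Fin n) : KLR R n e ℓ κ :=
  RingQuot.mkAlgHom R (KLRRel R n e ℓ κ) (kY R k)

end Paper
/-! ## The deformed cyclotomic quiver Hecke algebra -/

namespace Paper

/-- `y_k^⟨d⟩ = t^d y_k + [d]_t` in the free algebra. -/
def ydot (R : Type*) [CommRing R] (t : Rˣ) {n e : ℕ} (d : ℤ) (k : Fin n) :
    FreeAlgebra R (KLRGen n e) :=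
  algebraMap R _ ((t ^ d : Rˣ) : R) * kY R k + algebraMap R _ (qintU t d)

/-- `ρ_r(i) = î_r - î_{r+1}` for `i ∈ I^n`. -/
def rhoI {n e : ℕ} (i : Fin n → ZMod e) (r : Fin (n - 1)) : ℤ :=
  ((i (pL r)).val : ℤ) - ((i (pR r)).val : ℤ)

/-- The defining relations of the deformed cyclotomic quiver Hecke algebra `R_n(O)`. -/
inductive DefKLRRel (R : Type*) [CommRing R] (t : Rˣ) (n e ℓ : ℕ) [NeZero e] (κ : ℕ → ℤ) :
    FreeAlgebra R (KLRGen n e) → FreeAlgebra R (KLRGen n e) → Prop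
  | cyc (h : 0 < n) (i : Fin n → ZMod e) :
      DefKLRRel R t n e ℓ κ
        ((((List.range ℓ).map fun l =>
            if ((κ l : ZMod e) = i ⟨0, h⟩) then
              kY R (⟨0, h⟩ : Fin n) -
                algebraMap R _ (qintU t (κ l - ((i ⟨0, h⟩).val : ℤ)))
            else 1).prod) * kE R i) 0
  | orth (i j : Fin n → ZMod e) (h : i ≠ j) : DefKLRRel R t n e ℓ κ (kE R i * kE R j) 0
  | idem (i : Fin n → ZMod e) : DefKLRRel R t n e ℓ κ (kE R i * kE R i) (kE R i)
  | complete : DefKLRRel R t n e ℓ κ (∑ i : Fin n → ZMod e, kE R i) 1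
  | yE (k : Fin n) (i : Fin n → ZMod e) :
      DefKLRRel R t n e ℓ κ (kY R k * kE R i) (kE R i * kY R k)
  | psiE (r : Fin (n - 1)) (i : Fin n → ZMod e) :
      DefKLRRel R t n e ℓ κ (kPsi R r * kE R i) (kE R (swapSeq i r) * kPsi R r)
  | yy (k m : Fin n) : DefKLRRel R t n e ℓ κ (kY R k * kY R m) (kY R m * kY R k)
  | psiyEq (r : Fin (n - 1)) (i : Fin n → ZMod e) (h : i (pL r) = i (pR r)) :
      DefKLRRel R t n e ℓ κ (kPsi R r * kY R (pR r) * kE R i)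
        ((kY R (pL r) * kPsi R r + 1) * kE R i)
  | psiyNe (r : Fin (n - 1)) (i : Fin n → ZMod e) (h : i (pL r) ≠ i (pR r)) :
      DefKLRRel R t n e ℓ κ (kPsi R r * kY R (pR r) * kE R i)
        (kY R (pL r) * kPsi R r * kE R i)
  | ypsiEq (r : Fin (n - 1)) (i : Fin n → ZMod e) (h : i (pL r) = i (pR r)) :
      DefKLRRel R t n e ℓ κ (kY R (pR r) * kPsi R r * kE R i)
        ((kPsi R r * kY R (pL r) + 1) * kE R i)
  | ypsiNe (r : Fin (n - 1)) (i : Fin n → ZMod e) (h : i (pL r) ≠ i (pR r)) :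
      DefKLRRel R t n e ℓ κ (kY R (pR r) * kPsi R r * kE R i)
        (kPsi R r * kY R (pL r) * kE R i)
  | psiyFar (r : Fin (n - 1)) (k : Fin n) (h : k.1 ≠ r.1 ∧ k.1 ≠ r.1 + 1) :
      DefKLRRel R t n e ℓ κ (kPsi R r * kY R k) (kY R k * kPsi R r)
  | psipsiFar (r s : Fin (n - 1)) (h : r.1 + 1 < s.1 ∨ s.1 + 1 < r.1) :
      DefKLRRel R t n e ℓ κ (kPsi R r * kPsi R s) (kPsi R s * kPsi R r)
  | quadEq (r : Fin (n - 1)) (i : Fin n → ZMod e) (h : i (pL r) = i (pR r)) :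
      DefKLRRel R t n e ℓ κ (kPsi R r ^ 2 * kE R i) 0
  | quadR (r : Fin (n - 1)) (i : Fin n → ZMod e)
      (h1 : i (pR r) = i (pL r) + 1) (h2 : i (pL r) ≠ i (pR r) + 1) :
      DefKLRRel R t n e ℓ κ (kPsi R r ^ 2 * kE R i)
        ((ydot R t (1 + rhoI i r) (pL r) - kY R (pR r)) * kE R i)
  | quadL (r : Fin (n - 1)) (i : Fin n → ZMod e)
      (h1 : i (pL r) = i (pR r) + 1) (h2 : i (pR r) ≠ i (pL r) + 1) :
      DefKLRRel R t n e ℓ κ (kPsi R r ^ 2 * kE R i)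
        ((ydot R t (1 - rhoI i r) (pR r) - kY R (pL r)) * kE R i)
  | quadBoth (r : Fin (n - 1)) (i : Fin n → ZMod e)
      (h1 : i (pR r) = i (pL r) + 1) (h2 : i (pL r) = i (pR r) + 1) :
      DefKLRRel R t n e ℓ κ (kPsi R r ^ 2 * kE R i)
        ((ydot R t (1 + rhoI i r) (pL r) - kY R (pR r)) *
          (ydot R t (1 - rhoI i r) (pR r) - kY R (pL r)) * kE R i)
  | quadNone (r : Fin (n - 1)) (i : Fin n → ZMod e) (h1 : i (pL r) ≠ i (pR r))
      (h2 : i (pR r) ≠ i (pL r) + 1) (h3 : i (pL r) ≠ i (pR r) + 1) :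
      DefKLRRel R t n e ℓ κ (kPsi R r ^ 2 * kE R i) (kE R i)
  | braidBoth (r : Fin (n - 1)) (hr : r.1 + 1 < n - 1) (i : Fin n → ZMod e)
      (h0 : i (pM r hr) = i (pL r)) (h1 : i (pR r) = i (pL r) + 1)
      (h2 : i (pL r) = i (pR r) + 1) :
      DefKLRRel R t n e ℓ κ
        ((kPsi R r * kPsi R ⟨r.1 + 1, hr⟩ * kPsi R r -
            kPsi R ⟨r.1 + 1, hr⟩ * kPsi R r * kPsi R ⟨r.1 + 1, hr⟩) * kE R i)
        ((ydot R t (1 + rhoI i r) (pL r) + ydot R t (1 + rhoI i r) (pM r hr) -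
            ydot R t (1 + rhoI i r) (pR r) - ydot R t (1 - rhoI i r) (pR r)) * kE R i)
  | braidR (r : Fin (n - 1)) (hr : r.1 + 1 < n - 1) (i : Fin n → ZMod e)
      (h0 : i (pM r hr) = i (pL r)) (h1 : i (pR r) = i (pL r) + 1)
      (h2 : i (pL r) ≠ i (pR r) + 1) :
      DefKLRRel R t n e ℓ κ
        ((kPsi R r * kPsi R ⟨r.1 + 1, hr⟩ * kPsi R r -
            kPsi R ⟨r.1 + 1, hr⟩ * kPsi R r * kPsi R ⟨r.1 + 1, hr⟩) * kE R i)
        (algebraMap R _ (-(((t ^ (1 + rhoI i r) : Rˣ) : R))) * kE R i)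
  | braidL (r : Fin (n - 1)) (hr : r.1 + 1 < n - 1) (i : Fin n → ZMod e)
      (h0 : i (pM r hr) = i (pL r)) (h1 : i (pL r) = i (pR r) + 1)
      (h2 : i (pR r) ≠ i (pL r) + 1) :
      DefKLRRel R t n e ℓ κ
        ((kPsi R r * kPsi R ⟨r.1 + 1, hr⟩ * kPsi R r -
            kPsi R ⟨r.1 + 1, hr⟩ * kPsi R r * kPsi R ⟨r.1 + 1, hr⟩) * kE R i)
        (kE R i)
  | braidNone (r : Fin (n - 1)) (hr : r.1 + 1 < n - 1) (i : Fin n → ZMod e)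
      (h : ¬(i (pM r hr) = i (pL r) ∧
        (i (pR r) = i (pL r) + 1 ∨ i (pL r) = i (pR r) + 1))) :
      DefKLRRel R t n e ℓ κ
        ((kPsi R r * kPsi R ⟨r.1 + 1, hr⟩ * kPsi R r -
            kPsi R ⟨r.1 + 1, hr⟩ * kPsi R r * kPsi R ⟨r.1 + 1, hr⟩) * kE R i) 0

/-- The deformed cyclotomic quiver Hecke algebra `R_n(R)`. -/
noncomputable abbrev DefKLR (R : Type*) [CommRing R] (t : Rˣ) (n e ℓ : ℕ) [NeZero e]
    (κ : ℕ → ℤ) : Type _ :=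
  RingQuot (DefKLRRel R t n e ℓ κ)

/-- The generator `f_i` of the deformed cyclotomic quiver Hecke algebra. -/
noncomputable def DfGen (R : Type*) [CommRing R] (t : Rˣ) (n e ℓ : ℕ) [NeZero e]
    (κ : ℕ → ℤ) (i : Fin n → ZMod e) : DefKLR R t n e ℓ κ :=
  RingQuot.mkAlgHom R (DefKLRRel R t n e ℓ κ) (kE R i)

/-- The generator `ψ_r` of the deformed cyclotomic quiver Hecke algebra. -/
noncomputable def DpsiGen (R : Type*) [CommRing R] (t : Rˣ) (n e ℓ : ℕ) [NeZero e]
    (κ : ℕ → ℤ) (r : Fin (n - 1)) : DefKLR R t n e ℓ κ :=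
  RingQuot.mkAlgHom R (DefKLRRel R t n e ℓ κ) (kPsi R r)

/-- The generator `y_k` of the deformed cyclotomic quiver Hecke algebra. -/
noncomputable def DyGen (R : Type*) [CommRing R] (t : Rˣ) (n e ℓ : ℕ) [NeZero e]
    (κ : ℕ → ℤ) (k : Fin n) : DefKLR R t n e ℓ κ :=
  RingQuot.mkAlgHom R (DefKLRRel R t n e ℓ κ) (kY R k)

/-! ## Seminormal idempotents -/

/-- The seminormal idempotent `F_T` of the semisimple cyclotomic Hecke algebra:
`F_T = ∏_{k=1}^n ∏_{c ∈ Cont(n), [c_k(T)] ≠ [c]} (L_k - [c]) / ([c_k(T)] - [c])`. -/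
noncomputable def Fidem (K : Type*) [Field K] (tK : Kˣ) (n ℓ : ℕ) (κ : ℕ → ℤ)
    (T : StdTableau ℓ n) : CycHecke K tK n ℓ κ :=
  ((List.finRange n).map (fun k =>
    (((contFinset ℓ n κ).sort (· ≤ ·)).map (fun c =>
      if qint (tK : K) (content κ T (k.1 + 1)) ≠ qint (tK : K) c then
        (Lgen K tK n ℓ κ k - algebraMap K _ (qint (tK : K) c)) *
          algebraMap K _ ((qint (tK : K) (content κ T (k.1 + 1)) - qint (tK : K) c)⁻¹)
      else 1)).prod)).prod

/-- The residue idempotent `f_i = Σ_{T ∈ Std(i)} F_T`. -/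
noncomputable def fres (K : Type*) [Field K] (tK : Kˣ) (n ℓ e : ℕ) (κ : ℕ → ℤ)
    (i : Fin n → ZMod e) : CycHecke K tK n ℓ κ :=
  ∑ᶠ T : {T : StdTableau ℓ n // resSeq e κ T = i}, Fidem K tK n ℓ κ T.1

/-- The simultaneous two-sided eigenspace `H_{S,T}` of the Jucys–Murphy elements. -/
noncomputable def eigSub (K : Type*) [Field K] (tK : Kˣ) (n ℓ : ℕ) (κ : ℕ → ℤ)
    (S T : StdTableau ℓ n) : Submodule K (CycHecke K tK n ℓ κ) where
  carrier := {h | ∀ k : Fin n,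
      Lgen K tK n ℓ κ k * h = qint (tK : K) (content κ S (k.1 + 1)) • h ∧
      h * Lgen K tK n ℓ κ k = qint (tK : K) (content κ T (k.1 + 1)) • h}
  add_mem' := by
    intro a b ha hb
    intro k
    obtain ⟨h1, h2⟩ := ha k
    obtain ⟨h3, h4⟩ := hb k
    exact ⟨by rw [mul_add, h1, h3, smul_add], by rw [add_mul, h2, h4, smul_add]⟩
  zero_mem' := by intro k; simp
  smul_mem' := by
    intro c a ha
    intro k
    obtain ⟨h1, h2⟩ := ha k
    constructor
    · rw [mul_smul_comm, h1, smul_comm]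
    · rw [smul_mul_assoc, h2, smul_comm]

end Paper

namespace Paper
namespace LE

open MvPolynomial

/-! ### The local ring `Oo` of the affine space at the point `(1, …, 1)` -/

section localring

variable (K : Type) [Field K] (n : ℕ)

/-- Polynomials in `n` variables. -/
abbrev Pol := MvPolynomial (Fin n) K

/-- Polynomials not vanishing at `(1, …, 1)`. -/
noncomputable def Mloc : Submonoid (Pol K n) :=
  (nonZeroDivisors K).comap (eval (fun _ => (1 : K)))

lemma mem_Mloc (p : Pol K n) : p ∈ Mloc K n ↔ eval (fun _ => (1 : K)) p ≠ 0 := by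
  simp [Mloc, Submonoid.mem_comap]

lemma Mloc_le : Mloc K n ≤ nonZeroDivisors (Pol K n) := by
  intro p hp
  rw [mem_Mloc] at hp
  apply mem_nonZeroDivisors_of_ne_zero
  rintro rfl
  simp at hp

/-- The local ring at `(1, …, 1)`. -/
abbrev Oo := Localization (Mloc K n)

instance : IsDomain (Oo K n) := IsLocalization.isDomain_localization (Mloc_le K n)

/-- The coordinate functions. -/
noncomputable def uu (k : Fin n) : Oo K n := algebraMap (Pol K n) (Oo K n) (X k)

/-- Constants. -/
noncomputable def cO : K →+* Oo K n := (algebraMap (Pol K n) (Oo K n)).comp C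

lemma isUnit_of_eval {p : Pol K n} (h : eval (fun _ => (1 : K)) p ≠ 0) :
    IsUnit (algebraMap (Pol K n) (Oo K n) p) :=
  IsLocalization.map_units (Oo K n) (⟨p, (mem_Mloc K n p).2 h⟩ : Mloc K n)

lemma lin_eq (a b : K) (i j : Fin n) : cO K n a * uu K n i - cO K n b * uu K n j =
    algebraMap (Pol K n) (Oo K n) (C a * X i - C b * X j) := by
  simp [cO, uu]

lemma lin_unit {a b : K} (h : a ≠ b) (i j : Fin n) :
    IsUnit (cO K n a * uu K n i - cO K n b * uu K n j) := by
  rw [lin_eq]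
  apply isUnit_of_eval
  simp [sub_ne_zero, h]

lemma lin_unit_c {a b : K} (h : a ≠ b) (i : Fin n) :
    IsUnit (cO K n a * uu K n i - cO K n b) := by
  have : cO K n a * uu K n i - cO K n b =
      algebraMap (Pol K n) (Oo K n) (C a * X i - C b) := by
    simp [cO, uu]
  rw [this]
  apply isUnit_of_eval
  simp [sub_ne_zero, h]

lemma lin_ne {a b : K} (ha : a ≠ 0) {i j : Fin n} (hij : i ≠ j) :
    cO K n a * uu K n i - cO K n b * uu K n j ≠ 0 := by
  rw [lin_eq]
  intro h
  have h2 := (IsLocalization.injective (Oo K n) (Mloc_le K n)) (h.trans (map_zero _).symm)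
  have h3 := congrArg (eval (fun k => if k = i then (1 : K) else 0)) h2
  simp [hij.symm, ha] at h3

/-- Permutation of the variables. -/
noncomputable def sig (π : Equiv.Perm (Fin n)) : Oo K n →+* Oo K n :=
  IsLocalization.map (M := Mloc K n) (T := Mloc K n) (Oo K n)
    ((rename π : Pol K n →ₐ[K] Pol K n) : Pol K n →+* Pol K n) (by
      intro p hp
      rw [Submonoid.mem_comap, mem_Mloc]
      rw [mem_Mloc] at hp
      simpa [eval_rename, Function.comp_def] using hp)

lemma sig_alg (π : Equiv.Perm (Fin n)) (p : Pol K n) :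
    sig K n π (algebraMap _ _ p) = algebraMap _ _ (rename π p) := by
  simp [sig, IsLocalization.map_eq]

lemma sig_u (π : Equiv.Perm (Fin n)) (k : Fin n) : sig K n π (uu K n k) = uu K n (π k) := by
  simp only [uu]; rw [sig_alg]; simp

lemma sig_c (π : Equiv.Perm (Fin n)) (a : K) : sig K n π (cO K n a) = cO K n a := by
  simp only [cO, RingHom.comp_apply]; rw [sig_alg]; simp

lemma sub_dvd (i j : Fin n) (f : Oo K n) :
    (uu K n i - uu K n j) ∣ sig K n (Equiv.swap i j) f - f := by
  rw [← Ideal.mem_span_singleton, ← Ideal.Quotient.eq]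
  set I := Ideal.span {uu K n i - uu K n j} with hI
  have hij : Ideal.Quotient.mk I (uu K n i) = Ideal.Quotient.mk I (uu K n j) := by
    rw [Ideal.Quotient.eq]; exact Ideal.subset_span rfl
  have : (Ideal.Quotient.mk I).comp (sig K n (Equiv.swap i j)) = Ideal.Quotient.mk I := by
    apply IsLocalization.ringHom_ext (Mloc K n)
    apply MvPolynomial.ringHom_ext
    · intro a
      have := sig_c K n (Equiv.swap i j) a
      simp only [cO, RingHom.comp_apply] at this
      simp [this]
    · intro k
      have := sig_u K n (Equiv.swap i j) k
      simp only [uu] at this hij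
      simp only [RingHom.comp_apply, this]
      by_cases h1 : k = i
      · subst h1; simp [hij]
      · by_cases h2 : k = j
        · subst h2; simp [hij]
        · rw [Equiv.swap_apply_of_ne_of_ne h1 h2]
  exact RingHom.congr_fun this f

/-- The augmentation ideal. -/
noncomputable def aug : Ideal (Pol K n) := RingHom.ker (eval (fun _ => (1 : K)))

/-- The maximal ideal of the local ring. -/
noncomputable def mO : Ideal (Oo K n) := (aug K n).map (algebraMap (Pol K n) (Oo K n))

lemma sig_mO (π : Equiv.Perm (Fin n)) (M : ℕ) {f : Oo K n} (hf : f ∈ mO K n ^ M) :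
    sig K n π f ∈ mO K n ^ M := by
  suffices h : mO K n ^ M ≤ (mO K n ^ M).comap (sig K n π) from h hf
  have h1 : mO K n ≤ (mO K n).comap (sig K n π) := by
    rw [mO, Ideal.map_le_iff_le_comap]
    intro p hp
    rw [Ideal.mem_comap, Ideal.mem_comap, sig_alg]
    apply Ideal.mem_map_of_mem
    simpa [aug, RingHom.mem_ker, eval_rename, Function.comp_def] using hp
  rw [← Ideal.map_le_iff_le_comap, Ideal.map_pow]
  exact Ideal.pow_right_mono (Ideal.map_le_iff_le_comap.2 h1) M

lemma dens (M : ℕ) (f : Oo K n) :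
    ∃ p : Pol K n, f - algebraMap (Pol K n) (Oo K n) p ∈ mO K n ^ M := by
  obtain ⟨⟨p, s⟩, hs⟩ := IsLocalization.surj (Mloc K n) f
  simp only at hs
  set c := eval (fun _ => (1 : K)) (s : Pol K n) with hc
  have hc0 : c ≠ 0 := (mem_Mloc K n _).1 s.2
  set m : Pol K n := 1 - C c⁻¹ * (s : Pol K n) with hm
  have hma : m ∈ aug K n := by
    simp [aug, RingHom.mem_ker, hm, ← hc, hc0]
  refine ⟨p * C c⁻¹ * ∑ i ∈ Finset.range M, m ^ i, ?_⟩
  have h1 : (C c⁻¹ * (s : Pol K n)) * ∑ i ∈ Finset.range M, m ^ i = 1 - m ^ M := by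
    have := mul_neg_geom_sum m M
    rw [← this, hm]; ring
  have h2 : f - algebraMap (Pol K n) (Oo K n) (p * C c⁻¹ * ∑ i ∈ Finset.range M, m ^ i)
      = f * algebraMap (Pol K n) (Oo K n) (m ^ M) := by
    have h3 : algebraMap (Pol K n) (Oo K n) (m ^ M) = 1 - algebraMap (Pol K n) (Oo K n)
        ((C c⁻¹ * (s : Pol K n)) * ∑ i ∈ Finset.range M, m ^ i) := by
      rw [h1]; simp
    rw [h3]
    simp only [map_mul, ← hs]
    ring
  rw [h2]
  apply Ideal.mul_mem_left
  rw [map_pow]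
  exact Ideal.pow_mem_pow (Ideal.mem_map_of_mem _ hma) M

/-- The divided difference lowers the order of vanishing by at most one. -/
lemma dd_mO (i j : Fin n) (hij : i ≠ j) (M : ℕ) :
    ∀ f ∈ mO K n ^ (M + 1), ∀ g : Oo K n, (uu K n i - uu K n j) * g =
      sig K n (Equiv.swap i j) f - f → g ∈ mO K n ^ M := by
  have hne : uu K n i - uu K n j ≠ 0 := by
    have := lin_ne K n (a := 1) (b := 1) one_ne_zero hij
    simpa using this
  induction M with
  | zero => intro f _ g _; simp
  | succ M ih =>
    intro f hf
    rw [Submodule.pow_succ, Ideal.mul_comm] at hf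
    refine Submodule.mul_induction_on hf ?_ ?_
    · intro a ha b hb g hg
      obtain ⟨ga, hga⟩ := sub_dvd K n i j a
      obtain ⟨gb, hgb⟩ := sub_dvd K n i j b
      have h1 := ih b hb gb hgb.symm
      have h2 : g = sig K n (Equiv.swap i j) a * gb + ga * b := by
        apply mul_left_cancel₀ hne
        rw [hg, map_mul]
        linear_combination (-sig K n (Equiv.swap i j) a) * hgb.symm - b * hga.symm
      rw [h2]
      apply Ideal.add_mem
      · rw [Submodule.pow_succ, Ideal.mul_comm]
        apply Ideal.mul_mem_mul _ h1
        have := sig_mO K n (Equiv.swap i j) 1 (f := a) (by simpa using ha)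
        simpa using this
      · exact Ideal.mul_mem_left _ _ hb
    · intro a b ha hb g hg
      obtain ⟨ga, hga⟩ := sub_dvd K n i j a
      obtain ⟨gb, hgb⟩ := sub_dvd K n i j b
      have h2 : g = ga + gb := by
        apply mul_left_cancel₀ hne
        rw [hg, map_add]
        linear_combination -hgb.symm - hga.symm
      rw [h2]
      exact Ideal.add_mem _ (ha _ hga.symm) (hb _ hgb.symm)

end localring

end LE
end Paper

namespace Paper
namespace LE

/-! ### Weights -/

section weights

/-- The integral weights: each entry is joined to some `κ l` by an interval of entries. -/
def Wt (n ℓ : ℕ) (κ : ℕ → ℤ) : Set (Fin n → ℤ) :=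
  {w | ∀ k, ∃ l, l < ℓ ∧ ∀ z, ((κ l ≤ z ∧ z ≤ w k) ∨ (w k ≤ z ∧ z ≤ κ l)) → ∃ j, w j = z}

variable {n ℓ : ℕ} {κ : ℕ → ℤ} {e : ℕ}

lemma wt_perm (π : Equiv.Perm (Fin n)) {w : Fin n → ℤ} (hw : w ∈ Wt n ℓ κ) :
    w ∘ π ∈ Wt n ℓ κ := by
  intro k
  obtain ⟨l, hl, h⟩ := hw (π k)
  refine ⟨l, hl, fun z hz => ?_⟩
  obtain ⟨j, hj⟩ := h z hz
  exact ⟨π.symm j, by simp [hj]⟩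

lemma card_le_of_range (w : Fin n → ℤ) (S : Finset ℤ) (h : ∀ z ∈ S, ∃ j, w j = z) :
    S.card ≤ n := by
  have h1 : S ⊆ Finset.univ.image w := by
    intro z hz
    obtain ⟨j, hj⟩ := h z hz
    simp only [Finset.mem_image, Finset.mem_univ, true_and]
    exact ⟨j, hj⟩
  calc S.card ≤ (Finset.univ.image w).card := Finset.card_le_card h1
    _ ≤ Finset.univ.card := Finset.card_image_le
    _ = n := by simp

lemma wt_up {w : Fin n → ℤ} (hw : w ∈ Wt n ℓ κ) (i : Fin n) :
    ∃ l, l < ℓ ∧ ∃ a, w i ≤ a ∧ κ l ≤ a ∧ ∀ z, κ l ≤ z → z ≤ a → ∃ j, w j = z := by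
  obtain ⟨l, hl, h⟩ := hw i
  refine ⟨l, hl, max (w i) (κ l), le_max_left _ _, le_max_right _ _, fun z h1 h2 => ?_⟩
  rcases le_max_iff.1 h2 with h3 | h3
  · exact h z (Or.inl ⟨h1, h3⟩)
  · rcases le_total (w i) (κ l) with h4 | h4
    · exact h z (Or.inr ⟨by omega, by omega⟩)
    · exact h z (Or.inl ⟨by omega, by omega⟩)

lemma wt_down {w : Fin n → ℤ} (hw : w ∈ Wt n ℓ κ) (i : Fin n) :
    ∃ l, l < ℓ ∧ ∃ a, a ≤ w i ∧ a ≤ κ l ∧ ∀ z, a ≤ z → z ≤ κ l → ∃ j, w j = z := by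
  obtain ⟨l, hl, h⟩ := hw i
  refine ⟨l, hl, min (w i) (κ l), min_le_left _ _, min_le_right _ _, fun z h1 h2 => ?_⟩
  rcases min_le_iff.1 h1 with h3 | h3
  · exact h z (Or.inr ⟨h3, h2⟩)
  · rcases le_total (w i) (κ l) with h4 | h4
    · exact h z (Or.inr ⟨by omega, by omega⟩)
    · exact h z (Or.inl ⟨by omega, by omega⟩)

lemma wt_window (he : ∀ k l, k < ℓ → l < ℓ → (n : ℤ) + κ k - κ l < (e : ℤ))
    {w : Fin n → ℤ} (hw : w ∈ Wt n ℓ κ) (i j : Fin n) : w i - w j ≤ (e : ℤ) - 2 := by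
  obtain ⟨l, hl, a, ha1, ha2, ha⟩ := wt_up hw i
  obtain ⟨m, hm, b, hb1, hb2, hb⟩ := wt_down hw j
  have h1 := he l m hl hm
  have h2 := he l l hl hl
  by_cases hc : κ m < κ l
  · have := card_le_of_range w (Finset.Icc b (κ m) ∪ Finset.Icc (κ l) a) (by
      intro z hz
      simp only [Finset.mem_union, Finset.mem_Icc] at hz
      rcases hz with hz | hz
      · exact hb z hz.1 hz.2
      · exact ha z hz.1 hz.2)
    rw [Finset.card_union_of_disjoint] at this
    · simp only [Int.card_Icc] at this
      omega
    · rw [Finset.disjoint_left]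
      intro z hz
      simp only [Finset.mem_Icc] at hz ⊢
      omega
  · have := card_le_of_range w (Finset.Icc b a) (by
      intro z hz
      simp only [Finset.mem_Icc] at hz
      by_cases hz' : z ≤ κ m
      · exact hb z hz.1 hz'
      · exact ha z (by omega) hz.2)
    simp only [Int.card_Icc] at this
    omega

lemma wt_kappa (he : ∀ k l, k < ℓ → l < ℓ → (n : ℤ) + κ k - κ l < (e : ℤ))
    {w : Fin n → ℤ} (hw : w ∈ Wt n ℓ κ) (i : Fin n) {l : ℕ} (hl : l < ℓ) :
    w i - κ l < e ∧ κ l - w i < e := by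
  obtain ⟨m, hm, a, ha1, ha2, ha⟩ := wt_up hw i
  obtain ⟨m', hm', b, hb1, hb2, hb⟩ := wt_down hw i
  have h1 := he m l hm hl
  have h2 := he l m' hl hm'
  have h3 := card_le_of_range w (Finset.Icc (κ m) a) (by
    intro z hz
    simp only [Finset.mem_Icc] at hz
    exact ha z hz.1 hz.2)
  have h4 := card_le_of_range w (Finset.Icc b (κ m')) (by
    intro z hz
    simp only [Finset.mem_Icc] at hz
    exact hb z hz.1 hz.2)
  simp only [Int.card_Icc] at h3 h4
  omega

lemma wt_finite (hℓ : 1 ≤ ℓ) (he : ∀ k l, k < ℓ → l < ℓ → (n : ℤ) + κ k - κ l < (e : ℤ)) :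
    (Wt n ℓ κ).Finite := by
  apply Set.Finite.subset (Set.Finite.pi' (fun _ : Fin n => Set.finite_Icc (κ 0 - e) (κ 0 + e)))
  intro w hw i
  have := wt_kappa he hw i (l := 0) (by omega)
  simp only [Set.mem_Icc]
  omega

lemma wt_not_lt (he : ∀ k l, k < ℓ → l < ℓ → (n : ℤ) + κ k - κ l < (e : ℤ))
    {w w' : Fin n → ℤ} (hw : w ∈ Wt n ℓ κ) (hw' : w' ∈ Wt n ℓ κ)
    (h : ∀ k, (e : ℤ) ∣ w' k - w k) (k : Fin n) : ¬ w k < w' k := by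
  intro hk
  obtain ⟨l, hl, hl'⟩ := hw k
  obtain ⟨m, hm, hm'⟩ := hw' k
  have h1 := he m l hm hl
  have h2 := he m m hm hm
  have h3 : (e : ℤ) ≤ w' k - w k := Int.le_of_dvd (by omega) (h k)
  have key : ∀ z : Fin (n + 1), ∃ j, (e : ℤ) ∣ w j - (κ m + (z.1 : ℤ)) := by
    intro z
    have hz := z.2
    by_cases hc : κ m + (z.1 : ℤ) ≤ w' k
    · obtain ⟨j, hj⟩ := hm' (κ m + z.1) (Or.inl ⟨by omega, hc⟩)
      refine ⟨j, ?_⟩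
      rw [← hj, ← Int.dvd_neg]
      simpa using h j
    · obtain ⟨j, hj⟩ := hl' (κ m + z.1 - (w' k - w k)) (Or.inr ⟨by omega, by omega⟩)
      refine ⟨j, ?_⟩
      rw [hj, ← Int.dvd_neg]
      convert h k using 1
      ring
  choose f hf using key
  have hinj : Function.Injective f := by
    intro a b hab
    have ha := hf a
    have hb := hf b
    rw [hab] at ha
    have hd := Int.dvd_sub hb ha
    have : (w (f b) - (κ m + (b.1 : ℤ))) - (w (f b) - (κ m + (a.1 : ℤ))) = (a.1 : ℤ) - b.1 := by
      ring
    rw [this] at hd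
    have ha2 := a.2
    have hb2 := b.2
    have := Int.eq_zero_of_abs_lt_dvd hd (by rw [abs_lt]; omega)
    ext
    omega
  have := Fintype.card_le_of_injective f hinj
  simp at this

lemma wt_inj (he : ∀ k l, k < ℓ → l < ℓ → (n : ℤ) + κ k - κ l < (e : ℤ))
    {w w' : Fin n → ℤ} (hw : w ∈ Wt n ℓ κ) (hw' : w' ∈ Wt n ℓ κ)
    (h : ∀ k, (e : ℤ) ∣ w' k - w k) : w = w' := by
  funext k
  have h1 := wt_not_lt he hw hw' h k
  have h2 := wt_not_lt he hw' hw (fun k => by rw [← Int.dvd_neg]; simpa using h k) k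
  omega

/-- Sequences built one step at a time are weights. -/
lemma wt_of_step {w : Fin n → ℤ} (h : ∀ k : Fin n, (∃ l, l < ℓ ∧ w k = κ l) ∨
    ∃ j : Fin n, j < k ∧ (w j = w k + 1 ∨ w k = w j + 1)) : w ∈ Wt n ℓ κ := by
  intro k
  induction k using WellFoundedLT.induction with
  | ind k ih =>
    rcases h k with ⟨l, hl, h1⟩ | ⟨j, hj, h1⟩
    · exact ⟨l, hl, fun z hz => ⟨k, by omega⟩⟩
    · obtain ⟨l, hl, h2⟩ := ih j hj
      refine ⟨l, hl, fun z hz => ?_⟩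
      by_cases hzk : z = w k
      · exact ⟨k, hzk.symm⟩
      · exact h2 z (by omega)

end weights

end LE
end Paper

namespace Paper
namespace LE

open MvPolynomial

/-! ### The ring of functions near the weights -/

section rr

variable (K : Type) [Field K] (n ℓ : ℕ) (κ : ℕ → ℤ)

/-- Functions on the formal neighbourhoods of the weights. -/
abbrev RR := (Wt n ℓ κ) → Oo K n

/-- Constants. -/
noncomputable def cst : K →+* RR K n ℓ κ := RingHom.pi (fun _ => cO K n)

lemma cst_apply (a : K) (w : Wt n ℓ κ) : cst K n ℓ κ a w = cO K n a := rfl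

/-- Precomposition of a weight with a permutation. -/
def wperm (π : Equiv.Perm (Fin n)) (w : Wt n ℓ κ) : Wt n ℓ κ := ⟨w.1 ∘ π, wt_perm π w.2⟩

/-- The action of permutations. -/
noncomputable def act (π : Equiv.Perm (Fin n)) : RR K n ℓ κ →+* RR K n ℓ κ :=
  RingHom.pi (fun w => (sig K n π).comp (Pi.evalRingHom _ (wperm n ℓ κ π w)))

lemma act_apply (π : Equiv.Perm (Fin n)) (f : RR K n ℓ κ) (w : Wt n ℓ κ) :
    act K n ℓ κ π f w = sig K n π (f (wperm n ℓ κ π w)) := rfl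

lemma act_cst (π : Equiv.Perm (Fin n)) (a : K) :
    act K n ℓ κ π (cst K n ℓ κ a) = cst K n ℓ κ a := by
  funext w; rw [act_apply, cst_apply, cst_apply, sig_c]

variable {K}

/-- Integral powers of `t`, as elements of the field. -/
def tp (t : Kˣ) (z : ℤ) : K := ((t ^ z : Kˣ) : K)

lemma tp_succ (t : Kˣ) (z : ℤ) : tp t (z + 1) = t * tp t z := by
  simp [tp, zpow_add, mul_comm]

lemma tp_ne_zero (t : Kˣ) (z : ℤ) : tp t z ≠ 0 := Units.ne_zero _

lemma tp_neg (t : Kˣ) (z : ℤ) : tp t (-z) * tp t z = 1 := by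
  unfold tp; rw [← Units.val_mul, ← zpow_add]; simp

/-- The only integers `z` with `t ^ z = 1` are multiples of `e`. -/
def Good (e : ℕ) (t : Kˣ) : Prop := ∀ z : ℤ, t ^ z = 1 → (e : ℤ) ∣ z

lemma good_dvd {e : ℕ} {t : Kˣ} (ht : Good e t) {a b : ℤ} (h : tp t a = tp t b) :
    (e : ℤ) ∣ a - b := by
  apply ht
  have h1 : t ^ a = t ^ b := Units.ext h
  rw [zpow_sub, h1, mul_inv_cancel]

lemma good_ne {e : ℕ} {t : Kˣ} (ht : Good e t) {a b : ℤ} (h : a ≠ b) (h1 : a - b < e)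
    (h2 : b - a < e) : tp t a ≠ tp t b := by
  intro h3
  have := Int.eq_zero_of_abs_lt_dvd (good_dvd ht h3) (by rw [abs_lt]; omega)
  omega

variable {n}

/-- The elements of `RR` corresponding to the generators `X_k` of the Hecke algebra with
parameter `t`. -/
noncomputable def xx (t : Kˣ) (k : Fin n) : RR K n ℓ κ :=
  fun w => cO K n (tp t (w.1 k)) * uu K n k

lemma xx_apply (t : Kˣ) (k : Fin n) (w : Wt n ℓ κ) :
    xx ℓ κ t k w = cO K n (tp t (w.1 k)) * uu K n k := rfl

lemma act_xx (t : Kˣ) (π : Equiv.Perm (Fin n)) (k : Fin n) :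
    act K n ℓ κ π (xx ℓ κ t k) = xx ℓ κ t (π k) := by
  funext w
  rw [act_apply, xx_apply, xx_apply, map_mul, sig_c, sig_u]
  rfl

lemma xx_sub_ne (t : Kˣ) {i j : Fin n} (hij : i ≠ j) (w : Wt n ℓ κ) :
    xx ℓ κ t i w - xx ℓ κ t j w ≠ 0 := lin_ne K n (tp_ne_zero _ _) hij

lemma txx (t : Kˣ) (i j : Fin n) (w : Wt n ℓ κ) :
    cO K n t * xx ℓ κ t i w - xx ℓ κ t j w =
      cO K n (tp t (w.1 i + 1)) * uu K n i - cO K n (tp t (w.1 j)) * uu K n j := by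
  rw [xx_apply, xx_apply, tp_succ, map_mul]; ring

lemma txx_sub_ne (t : Kˣ) {i j : Fin n} (hij : i ≠ j) (w : Wt n ℓ κ) :
    cO K n t * xx ℓ κ t i w - xx ℓ κ t j w ≠ 0 := by
  rw [txx]; exact lin_ne K n (tp_ne_zero _ _) hij

variable {ℓ κ} {e : ℕ}

lemma dd_ex (he : ∀ k l, k < ℓ → l < ℓ → (n : ℤ) + κ k - κ l < (e : ℤ))
    {t : Kˣ} (ht : Good e t) {i j : Fin n} (hij : i ≠ j) (f : RR K n ℓ κ) :
    ∃ g : RR K n ℓ κ, (∀ w, (xx ℓ κ t i w - xx ℓ κ t j w) * g w =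
        act K n ℓ κ (Equiv.swap i j) f w - f w) ∧
      ∀ M, (∀ w, f w ∈ mO K n ^ (M + 1)) → ∀ w, g w ∈ mO K n ^ M := by
  have key : ∀ w : Wt n ℓ κ, ∃ g : Oo K n, (xx ℓ κ t i w - xx ℓ κ t j w) * g =
        act K n ℓ κ (Equiv.swap i j) f w - f w ∧
      ∀ M, (∀ w, f w ∈ mO K n ^ (M + 1)) → g ∈ mO K n ^ M := by
    intro w
    by_cases hw : w.1 i = w.1 j
    · have hw2 : wperm n ℓ κ (Equiv.swap i j) w = w := by
        apply Subtype.ext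
        funext k
        simp only [wperm, Function.comp_apply]
        by_cases h1 : k = i
        · subst h1; simp [hw]
        · by_cases h2 : k = j
          · subst h2; simp [hw]
          · rw [Equiv.swap_apply_of_ne_of_ne h1 h2]
      obtain ⟨g, hg⟩ := sub_dvd K n i j (f w)
      have h1 : cO K n (tp t (-w.1 j)) * cO K n (tp t (w.1 j)) = 1 := by
        rw [← map_mul, tp_neg, map_one]
      refine ⟨cO K n (tp t (-w.1 j)) * g, ?_, ?_⟩
      · rw [act_apply, hw2, hg, xx_apply, xx_apply, hw]
        linear_combination ((uu K n i - uu K n j) * g) * h1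
      · intro M hM
        exact Ideal.mul_mem_left _ _ (dd_mO K n i j hij M (f w) (hM w) g hg.symm)
    · have h1 := wt_window he w.2 i j
      have h2 := wt_window he w.2 j i
      have hu : IsUnit (xx ℓ κ t i w - xx ℓ κ t j w) :=
        lin_unit K n (good_ne ht hw (by omega) (by omega)) i j
      obtain ⟨v, hv⟩ := hu.exists_right_inv
      refine ⟨v * (act K n ℓ κ (Equiv.swap i j) f w - f w), ?_, ?_⟩
      · rw [← mul_assoc, hv, one_mul]
      · intro M hM
        apply Ideal.mul_mem_left
        have h3 : mO K n ^ (M + 1) ≤ mO K n ^ M := Ideal.pow_le_pow_right (Nat.le_succ M)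
        apply Ideal.sub_mem
        · exact h3 (sig_mO K n _ _ (hM _))
        · exact h3 (hM w)
  choose g hg using key
  exact ⟨g, fun w => (hg w).1, fun M hM w => (hg w).2 M hM⟩

/-- `Delta f = (t x_i - x_j) (s f - f) / (x_i - x_j)`. -/
lemma Delta_ex (he : ∀ k l, k < ℓ → l < ℓ → (n : ℤ) + κ k - κ l < (e : ℤ))
    {t : Kˣ} (ht : Good e t) {i j : Fin n} (hij : i ≠ j) :
    ∃ Δ : RR K n ℓ κ → RR K n ℓ κ, (∀ f, (xx ℓ κ t i - xx ℓ κ t j) * Δ f =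
        (cst K n ℓ κ t * xx ℓ κ t i - xx ℓ κ t j) * (act K n ℓ κ (Equiv.swap i j) f - f)) ∧
      ∀ f M, (∀ w, f w ∈ mO K n ^ (M + 1)) → ∀ w, Δ f w ∈ mO K n ^ M := by
  choose g hg using dd_ex (K := K) he ht hij
  refine ⟨fun f => (cst K n ℓ κ t * xx ℓ κ t i - xx ℓ κ t j) * g f, ?_, ?_⟩
  · intro f
    funext w
    have := (hg f).1 w
    simp only [Pi.mul_apply, Pi.sub_apply]
    rw [← this]; ring
  · intro f M hM w
    exact Ideal.mul_mem_left _ _ ((hg f).2 M hM w)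

lemma xx_cancel (t : Kˣ) {i j : Fin n} (hij : i ≠ j) {a b : RR K n ℓ κ}
    (h : (xx ℓ κ t i - xx ℓ κ t j) * a = (xx ℓ κ t i - xx ℓ κ t j) * b) : a = b := by
  funext w
  exact mul_left_cancel₀ (xx_sub_ne ℓ κ t hij w) (congrFun h w)

lemma txx_cancel (t : Kˣ) {i j : Fin n} (hij : i ≠ j) {a b : RR K n ℓ κ}
    (h : (cst K n ℓ κ t * xx ℓ κ t i - xx ℓ κ t j) * a =
      (cst K n ℓ κ t * xx ℓ κ t i - xx ℓ κ t j) * b) : a = b := by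
  funext w
  exact mul_left_cancel₀ (txx_sub_ne ℓ κ t hij w) (congrFun h w)

lemma theta_ex (he : ∀ k l, k < ℓ → l < ℓ → (n : ℤ) + κ k - κ l < (e : ℤ)) (he2 : 2 ≤ e)
    {t t' : Kˣ} (ht : Good e t) (ht' : Good e t') (i j : Fin n) :
    ∃ θ : RR K n ℓ κ, (cst K n ℓ κ t * xx ℓ κ t i - xx ℓ κ t j) *
        ((xx ℓ κ t' i - xx ℓ κ t' j) * θ) =
      (cst K n ℓ κ t' * xx ℓ κ t' i - xx ℓ κ t' j) * (xx ℓ κ t i - xx ℓ κ t j) := by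
  have key : ∀ w : Wt n ℓ κ, ∃ θ : Oo K n, (cO K n t * xx ℓ κ t i w - xx ℓ κ t j w) *
        ((xx ℓ κ t' i w - xx ℓ κ t' j w) * θ) =
      (cO K n t' * xx ℓ κ t' i w - xx ℓ κ t' j w) * (xx ℓ κ t i w - xx ℓ κ t j w) := by
    intro w
    have h1 := wt_window he w.2 i j
    have h2 := wt_window he w.2 j i
    by_cases hw : w.1 i = w.1 j
    · have hu : IsUnit (cO K n t * uu K n i - cO K n 1 * uu K n j) := by
        apply lin_unit
        have := good_ne ht (a := 1) (b := 0) (by omega) (by omega) (by omega)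
        simpa [tp] using this
      obtain ⟨v, hv⟩ := hu.exists_right_inv
      refine ⟨v * (cO K n t' * uu K n i - uu K n j), ?_⟩
      simp only [xx_apply, hw]
      rw [map_one, one_mul] at hv
      linear_combination (cO K n (tp t (w.1 j)) * cO K n (tp t' (w.1 j)) *
        (uu K n i - uu K n j) * (cO K n t' * uu K n i - uu K n j)) * hv
    · have hu : IsUnit (xx ℓ κ t' i w - xx ℓ κ t' j w) :=
        lin_unit K n (good_ne ht' hw (by omega) (by omega)) i j
      obtain ⟨v, hv⟩ := hu.exists_right_inv
      by_cases hw1 : w.1 j = w.1 i + 1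
      · have h3 : cO K n (tp t (-w.1 j)) * cO K n (tp t (w.1 j)) = 1 := by
          rw [← map_mul, tp_neg, map_one]
        refine ⟨v * (cO K n (tp t (-w.1 j)) * cO K n (tp t' (w.1 j)) *
          (xx ℓ κ t i w - xx ℓ κ t j w)), ?_⟩
        rw [txx, txx, ← hw1]
        rw [← mul_assoc (xx ℓ κ t' i w - xx ℓ κ t' j w), hv]
        linear_combination ((uu K n i - uu K n j) * cO K n (tp t' (w.1 j)) *
          (xx ℓ κ t i w - xx ℓ κ t j w)) * h3
      · have hu2 : IsUnit (cO K n t * xx ℓ κ t i w - xx ℓ κ t j w) := by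
          rw [txx]
          exact lin_unit K n (good_ne ht (Ne.symm hw1) (by omega) (by omega)) i j
        obtain ⟨v2, hv2⟩ := hu2.exists_right_inv
        refine ⟨v * (v2 * ((cO K n t' * xx ℓ κ t' i w - xx ℓ κ t' j w) *
          (xx ℓ κ t i w - xx ℓ κ t j w))), ?_⟩
        rw [← mul_assoc (xx ℓ κ t' i w - xx ℓ κ t' j w), hv, one_mul, ← mul_assoc, hv2, one_mul]
  choose θ hθ using key
  exact ⟨θ, funext hθ⟩

lemma cyc_ex (he : ∀ k l, k < ℓ → l < ℓ → (n : ℤ) + κ k - κ l < (e : ℤ))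
    {t : Kˣ} (t' : Kˣ) (ht : Good e t) (i : Fin n) {l : ℕ} (hl : l < ℓ) :
    ∃ g : RR K n ℓ κ, xx ℓ κ t' i - cst K n ℓ κ (tp t' (κ l)) =
      g * (xx ℓ κ t i - cst K n ℓ κ (tp t (κ l))) := by
  have key : ∀ w : Wt n ℓ κ, ∃ g : Oo K n, xx ℓ κ t' i w - cO K n (tp t' (κ l)) =
      g * (xx ℓ κ t i w - cO K n (tp t (κ l))) := by
    intro w
    have h1 := wt_kappa he w.2 i hl
    by_cases hw : w.1 i = κ l
    · have h3 : cO K n (tp t (-κ l)) * cO K n (tp t (κ l)) = 1 := by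
        rw [← map_mul, tp_neg, map_one]
      refine ⟨cO K n (tp t (-κ l)) * cO K n (tp t' (κ l)), ?_⟩
      rw [xx_apply, xx_apply, hw]
      linear_combination (-cO K n (tp t' (κ l)) * (uu K n i - 1)) * h3
    · have hu : IsUnit (xx ℓ κ t i w - cO K n (tp t (κ l))) :=
        lin_unit_c K n (good_ne ht hw (by omega) (by omega)) i
      obtain ⟨v, hv⟩ := hu.exists_left_inv
      refine ⟨(xx ℓ κ t' i w - cO K n (tp t' (κ l))) * v, ?_⟩
      rw [mul_assoc, hv, mul_one]
  choose g hg using key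
  exact ⟨g, funext hg⟩

end rr

end LE
end Paper

set_option linter.unusedSimpArgs false
namespace Paper
namespace LE

/-! ### Another presentation of the Hecke algebra -/

section pres

variable {K : Type} [Field K] {n ℓ : ℕ} {κ : ℕ → ℤ}

/-- The relations satisfied by `X_k = 1 + (t - 1) L_k` and `D_r = T_r - t`. -/
structure AHD {H : Type} [Ring H] [Algebra K H] (ℓ : ℕ) (κ : ℕ → ℤ) (t : Kˣ)
    (X : Fin n → H) (D : Fin (n - 1) → H) : Prop where
  comm : ∀ k m, X k * X m = X m * X k
  Dx : ∀ r, D r * X (pL r) = X (pR r) * D r + X (pR r) - (t : K) • X (pL r)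
  Dy : ∀ r, D r * X (pR r) = X (pL r) * D r + (t : K) • X (pL r) - X (pR r)
  Dk : ∀ r k, k ≠ pL r → k ≠ pR r → D r * X k = X k * D r
  quad : ∀ r, D r * D r = (-(1 + t : K)) • D r
  far : ∀ r s : Fin (n - 1), (r.1 + 1 < s.1 ∨ s.1 + 1 < r.1) → D r * D s = D s * D r
  braid : ∀ r s : Fin (n - 1), s.1 = r.1 + 1 →
    D r * D s * D r - (t : K) • D r = D s * D r * D s - (t : K) • D s
  cyc : ∀ h : 0 < n, ((List.range ℓ).map fun l =>
    X ⟨0, h⟩ - algebraMap K H (tp t (κ l))).prod = 0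

lemma list_prod_smul {H : Type} [Ring H] [Algebra K H] (c : K) (f : ℕ → H) (l : List ℕ) :
    (l.map fun i => c • f i).prod = c ^ l.length • (l.map f).prod := by
  induction l with
  | nil => simp
  | cons a l ih =>
    simp only [List.map_cons, List.prod_cons, ih, List.length_cons, pow_succ', smul_mul_assoc,
      mul_smul_comm, smul_smul, mul_comm]

lemma qint_tp (t : Kˣ) (d : ℤ) : 1 + ((t : K) - 1) * qintU t d = tp t d := by
  unfold qintU tp
  split_ifs with h
  · obtain ⟨m, rfl⟩ := Int.eq_ofNat_of_zero_le h
    simp [mul_geom_sum]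
  · obtain ⟨m, hm⟩ := Int.exists_eq_neg_ofNat (by omega : d ≤ 0)
    subst hm
    clear h
    rw [neg_neg, Int.toNat_natCast]
    induction m with
    | zero => simp
    | succ m ih =>
      rw [Finset.sum_range_succ]
      have h1 : ((t ^ (-(m : ℤ)) : Kˣ) : K) = t * ((t ^ (-((m : ℤ) + 1)) : Kˣ) : K) := by
        rw [← Units.val_mul]
        congr 1
        rw [← zpow_one_add]
        congr 1
        ring
      push_cast at *
      linear_combination ih + h1

lemma ahd_gens (t : Kˣ) : AHD (K := K) ℓ κ t
    (fun k => 1 + ((t : K) - 1) • Lgen K t n ℓ κ k)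
    (fun r => Tgen K t n ℓ κ r - algebraMap K _ (t : K)) := by
  have q : ∀ {a b}, HeckeRel K t n ℓ κ a b → RingQuot.mkAlgHom K (HeckeRel K t n ℓ κ) a =
      RingQuot.mkAlgHom K (HeckeRel K t n ℓ κ) b := fun h => RingQuot.mkAlgHom_rel K h
  have hquad : ∀ r, (Tgen K t n ℓ κ r) * (Tgen K t n ℓ κ r) =
      ((t : K) - 1) • Tgen K t n ℓ κ r + (t : K) • 1 := by
    intro r
    have := q (HeckeRel.quad r)
    simp only [map_mul, map_add, map_sub, map_one, map_zero, AlgHom.commutes] at this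
    change (Tgen K t n ℓ κ r + 1) * (Tgen K t n ℓ κ r - _) = 0 at this
    rw [Algebra.algebraMap_eq_smul_one] at this
    linear_combination (norm := skip) this
    simp only [mul_add, add_mul, mul_sub, sub_mul, smul_mul_assoc, mul_smul_comm, mul_assoc,
      mul_one, one_mul]
    module
  have hTx : ∀ r, Tgen K t n ℓ κ r * (1 + ((t : K) - 1) • Lgen K t n ℓ κ (pL r)) =
      (1 + ((t : K) - 1) • Lgen K t n ℓ κ (pR r)) * (Tgen K t n ℓ κ r - ((t : K) - 1) • 1) := by
    intro r
    have := q (HeckeRel.LT r)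
    simp only [map_mul, map_add, map_sub, map_one, map_zero, AlgHom.commutes] at this
    change Lgen K t n ℓ κ (pR r) * (Tgen K t n ℓ κ r - _ + 1) =
      Tgen K t n ℓ κ r * Lgen K t n ℓ κ (pL r) + 1 at this
    rw [Algebra.algebraMap_eq_smul_one] at this
    linear_combination (norm := skip) (-(t - 1 : K)) • this
    simp only [mul_add, add_mul, mul_sub, sub_mul, smul_mul_assoc, mul_smul_comm, mul_assoc,
      mul_one, one_mul]
    module
  have hLL : ∀ k m, Lgen K t n ℓ κ k * Lgen K t n ℓ κ m = Lgen K t n ℓ κ m * Lgen K t n ℓ κ k := by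
    intro k m
    have := q (HeckeRel.LL k m)
    simp only [map_mul] at this
    exact this
  refine ⟨?_, ?_, ?_, ?_, ?_, ?_, ?_, ?_⟩
  · intro k m
    linear_combination (norm := skip) ((t : K) - 1) ^ 2 • hLL k m
    simp only [mul_add, add_mul, mul_sub, sub_mul, smul_mul_assoc, mul_smul_comm, mul_assoc,
      mul_one, one_mul]
    module
  · intro r
    have := hTx r
    simp only [Algebra.algebraMap_eq_smul_one]
    generalize (1 + ((t : K) - 1) • Lgen K t n ℓ κ (pL r)) = x at *
    generalize (1 + ((t : K) - 1) • Lgen K t n ℓ κ (pR r)) = y at *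
    linear_combination (norm := skip) this
    simp only [mul_add, add_mul, mul_sub, sub_mul, smul_mul_assoc, mul_smul_comm, mul_assoc,
      mul_one, one_mul]
    module
  · intro r
    have := hTx r
    have h2 := hquad r
    simp only [Algebra.algebraMap_eq_smul_one]
    generalize (1 + ((t : K) - 1) • Lgen K t n ℓ κ (pL r)) = x at *
    generalize (1 + ((t : K) - 1) • Lgen K t n ℓ κ (pR r)) = y at *
    generalize Tgen K t n ℓ κ r = T at *
    have h3 : T * x * T = (t : K) • y := by
      rw [this]
      linear_combination (norm := skip) y * h2
      simp only [mul_add, add_mul, mul_sub, sub_mul, smul_mul_assoc, mul_smul_comm, mul_assoc,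
        mul_one, one_mul]
      module
    have h4 : (t : K) • (T * y) = (t : K) • ((t - 1 : K) • y + x * T) := by
      linear_combination (norm := skip) h2 * (x * T) + (t - 1 : K) • h3 - T * h3
      simp only [mul_add, add_mul, mul_sub, sub_mul, smul_mul_assoc, mul_smul_comm, mul_assoc,
        mul_one, one_mul, neg_mul]
      module
    have h5 : T * y = (t - 1 : K) • y + x * T := smul_right_injective _ (Units.ne_zero t) h4
    linear_combination (norm := skip) h5
    simp only [mul_add, add_mul, mul_sub, sub_mul, smul_mul_assoc, mul_smul_comm, mul_assoc,
      mul_one, one_mul]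
    module
  · intro r k h1 h2
    have := q (HeckeRel.TL r k ⟨fun h => h1 (Fin.ext h), fun h => h2 (Fin.ext h)⟩)
    simp only [map_mul] at this
    change Tgen K t n ℓ κ r * Lgen K t n ℓ κ k = Lgen K t n ℓ κ k * Tgen K t n ℓ κ r at this
    simp only [Algebra.algebraMap_eq_smul_one]
    linear_combination (norm := skip) (t - 1 : K) • this
    simp only [mul_add, add_mul, mul_sub, sub_mul, smul_mul_assoc, mul_smul_comm, mul_assoc,
      mul_one, one_mul]
    module
  · intro r
    have := hquad r
    simp only [Algebra.algebraMap_eq_smul_one]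
    linear_combination (norm := skip) this
    simp only [mul_add, add_mul, mul_sub, sub_mul, smul_mul_assoc, mul_smul_comm, mul_assoc,
      mul_one, one_mul]
    module
  · intro r s h
    have := q (HeckeRel.TTfar r s h)
    simp only [map_mul] at this
    change Tgen K t n ℓ κ r * Tgen K t n ℓ κ s = Tgen K t n ℓ κ s * Tgen K t n ℓ κ r at this
    simp only [Algebra.algebraMap_eq_smul_one]
    linear_combination (norm := skip) this
    simp only [mul_add, add_mul, mul_sub, sub_mul, smul_mul_assoc, mul_smul_comm, mul_assoc,
      mul_one, one_mul]
    module
  · intro r s h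
    have := q (HeckeRel.braid r s h)
    simp only [map_mul] at this
    change Tgen K t n ℓ κ r * Tgen K t n ℓ κ s * Tgen K t n ℓ κ r =
      Tgen K t n ℓ κ s * Tgen K t n ℓ κ r * Tgen K t n ℓ κ s at this
    have hr := hquad r
    have hs := hquad s
    simp only [Algebra.algebraMap_eq_smul_one]
    generalize Tgen K t n ℓ κ r = T at *
    generalize Tgen K t n ℓ κ s = S at *
    linear_combination (norm := skip) this - (t : K) • hr + (t : K) • hs
    simp only [mul_add, add_mul, mul_sub, sub_mul, smul_mul_assoc, mul_smul_comm, mul_assoc,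
      mul_one, one_mul]
    module
  · intro h
    have := q (HeckeRel.cyc h)
    simp only [map_zero, map_list_prod, List.map_map] at this
    have h2 : (fun l => (1 + ((t : K) - 1) • Lgen K t n ℓ κ ⟨0, h⟩) -
        algebraMap K (CycHecke K t n ℓ κ) (tp t (κ l))) = fun l => (t - 1 : K) •
          (Lgen K t n ℓ κ ⟨0, h⟩ - algebraMap K _ (qintU t (κ l))) := by
      funext l
      rw [← qint_tp]
      simp only [Algebra.algebraMap_eq_smul_one]
      module
    rw [h2]
    refine (list_prod_smul _ _ _).trans ?_
    have h3 : (List.map (fun l => Lgen K t n ℓ κ ⟨0, h⟩ - algebraMap K _ (qintU t (κ l)))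
        (List.range ℓ)).prod = 0 := by
      rw [← this]
      congr 2
      funext l
      simp [Lgen]
    rw [h3, smul_zero]

lemma hom_of_ahd {H : Type} [Ring H] [Algebra K H] {t : Kˣ} (ht : (t : K) - 1 ≠ 0)
    {X : Fin n → H} {D : Fin (n - 1) → H} (h : AHD ℓ κ t X D) :
    ∃ φ : CycHecke K t n ℓ κ →ₐ[K] H,
      (∀ k, φ (1 + ((t : K) - 1) • Lgen K t n ℓ κ k) = X k) ∧
      (∀ r, φ (Tgen K t n ℓ κ r - algebraMap K _ (t : K)) = D r) := by
  let g : HeckeGen n → H := fun a => match a with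
    | HeckeGen.L k => ((t : K) - 1)⁻¹ • (X k - 1)
    | HeckeGen.T r => D r + algebraMap K H t
  have gL : ∀ k, FreeAlgebra.lift K g (hL K k) = ((t : K) - 1)⁻¹ • (X k - 1) := by
    intro k; rw [hL, FreeAlgebra.lift_ι_apply]
  have gT : ∀ r, FreeAlgebra.lift K g (hT K r) = D r + algebraMap K H t := by
    intro r; rw [hT, FreeAlgebra.lift_ι_apply]
  set c := ((t : K) - 1)⁻¹ with hc
  have hct : (t : K) = c⁻¹ + 1 := by rw [hc, inv_inv]; ring
  have hcc : c * (t - 1 : K) = 1 := inv_mul_cancel₀ ht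
  have key : ∀ ⦃a b⦄, HeckeRel K t n ℓ κ a b →
      FreeAlgebra.lift K g a = FreeAlgebra.lift K g b := by
    intro a b hab
    cases hab with
    | cyc h0 =>
      rw [map_zero, map_list_prod, List.map_map]
      have h2 : (⇑(FreeAlgebra.lift K g) ∘ fun l => hL K ⟨0, h0⟩ -
          algebraMap K _ (qintU t (κ l))) =
          fun l => c • (X ⟨0, h0⟩ - algebraMap K H (tp t (κ l))) := by
        funext l
        simp only [Function.comp_apply, map_sub, gL, AlgHom.commutes]
        rw [← qint_tp]
        simp only [Algebra.algebraMap_eq_smul_one]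
        have h3 : qintU t (κ l) = c * ((t - 1 : K) * qintU t (κ l)) := by
          rw [← mul_assoc, hcc, one_mul]
        conv_lhs => rw [h3]
        module
      rw [h2, list_prod_smul, h.cyc h0, smul_zero]
    | quad r =>
      simp only [map_mul, map_add, map_sub, map_one, map_zero, AlgHom.commutes, gT]
      simp only [Algebra.algebraMap_eq_smul_one]
      linear_combination (norm := skip) h.quad r
      simp only [mul_add, add_mul, mul_sub, sub_mul, smul_mul_assoc, mul_smul_comm, mul_assoc,
        mul_one, one_mul]
      module
    | LL k m =>
      simp only [map_mul, gL]
      linear_combination (norm := skip) c ^ 2 • h.comm k m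
      simp only [mul_add, add_mul, mul_sub, sub_mul, smul_mul_assoc, mul_smul_comm, mul_assoc,
        mul_one, one_mul]
      module
    | TTfar r s hh =>
      simp only [map_mul, gT]
      simp only [Algebra.algebraMap_eq_smul_one]
      linear_combination (norm := skip) h.far r s hh
      simp only [mul_add, add_mul, mul_sub, sub_mul, smul_mul_assoc, mul_smul_comm, mul_assoc,
        mul_one, one_mul]
      module
    | braid r s hh =>
      simp only [map_mul, gT]
      simp only [Algebra.algebraMap_eq_smul_one]
      linear_combination (norm := skip) h.braid r s hh + (t : K) • h.quad r - (t : K) • h.quad s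
      simp only [mul_add, add_mul, mul_sub, sub_mul, smul_mul_assoc, mul_smul_comm, mul_assoc,
        mul_one, one_mul]
      module
    | TL r k hh =>
      simp only [map_mul, gT, gL]
      simp only [Algebra.algebraMap_eq_smul_one]
      linear_combination (norm := skip) c • h.Dk r k (fun h => hh.1 (by rw [h]; rfl))
        (fun h => hh.2 (by rw [h]; rfl))
      simp only [mul_add, add_mul, mul_sub, sub_mul, smul_mul_assoc, mul_smul_comm, mul_assoc,
        mul_one, one_mul]
      module
    | LT r =>
      simp only [map_mul, map_add, map_sub, map_one, AlgHom.commutes, gT, gL]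
      simp only [Algebra.algebraMap_eq_smul_one]
      have h1 : (1 : H) = (c * (t - 1 : K)) • 1 := by rw [hcc, one_smul]
      linear_combination (norm := skip) (-c) • h.Dx r - h1
      simp only [mul_add, add_mul, mul_sub, sub_mul, smul_mul_assoc, mul_smul_comm, mul_assoc,
        mul_one, one_mul]
      module
  refine ⟨RingQuot.liftAlgHom K ⟨FreeAlgebra.lift K g, key⟩, ?_, ?_⟩
  · intro k
    rw [Lgen, map_add, map_smul, RingQuot.liftAlgHom_mkAlgHom_apply, gL, map_one, smul_smul,
      mul_comm, hcc, one_smul]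
    abel
  · intro r
    rw [Tgen, map_sub, RingQuot.liftAlgHom_mkAlgHom_apply, gT, AlgHom.commutes]
    abel

lemma hom_ext_gens {H : Type} [Ring H] [Algebra K H] {t : Kˣ} (ht : (t : K) - 1 ≠ 0)
    {φ ψ : CycHecke K t n ℓ κ →ₐ[K] H}
    (h1 : ∀ k, φ (1 + ((t : K) - 1) • Lgen K t n ℓ κ k) = ψ (1 + ((t : K) - 1) • Lgen K t n ℓ κ k))
    (h2 : ∀ r, φ (Tgen K t n ℓ κ r - algebraMap K _ (t : K)) =
      ψ (Tgen K t n ℓ κ r - algebraMap K _ (t : K))) : φ = ψ := by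
  apply RingQuot.ringQuot_ext'
  apply FreeAlgebra.hom_ext
  funext a
  cases a with
  | L k =>
    have := h1 k
    simp only [map_add, map_one, map_smul, add_right_inj] at this
    exact smul_right_injective _ ht this
  | T r =>
    have := h2 r
    simp only [map_sub, AlgHom.commutes, sub_left_inj] at this
    exact this

end pres

end LE
end Paper

set_option linter.unusedSimpArgs false
namespace Paper
namespace LE

/-! ### Prime ideals over the kernel of the polynomial evaluation -/

section primes

open MvPolynomial

variable {K : Type} [Field K] {n ℓ : ℕ} {κ : ℕ → ℤ}

lemma evQ_ex {H : Type} [Ring H] [Algebra K H] {Y : Fin n → H}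
    (h : ∀ k m, Y k * Y m = Y m * Y k) :
    ∃ φ : Pol K n →ₐ[K] H, ∀ k, φ (X k) = Y k := by
  let _ : CommRing (Algebra.adjoin K (Set.range Y)) := Algebra.adjoinCommRingOfComm K (by
    rintro _ ⟨a, rfl⟩ _ ⟨b, rfl⟩
    exact h a b)
  let ψ : Pol K n →ₐ[K] (Algebra.adjoin K (Set.range Y)) :=
    aeval (fun k => (⟨Y k, Algebra.subset_adjoin ⟨k, rfl⟩⟩ : Algebra.adjoin K (Set.range Y)))
  refine ⟨(Algebra.adjoin K (Set.range Y)).val.comp ψ, fun k => ?_⟩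
  simp [ψ]

lemma pL_ne_pR (r : Fin (n - 1)) : pL r ≠ pR r := by
  intro h
  have := congrArg Fin.val h
  simp [pL, pR] at this

variable {H : Type} [Ring H] [Algebra K H] {t : Kˣ} {Y : Fin n → H} {D : Fin (n - 1) → H}

lemma tau_mul (h : AHD ℓ κ t Y D) (r : Fin (n - 1)) (k : Fin n) :
    ((Y (pL r) - Y (pR r)) * D r + ((t : K) • Y (pL r) - Y (pR r))) * Y k =
    Y (Equiv.swap (pL r) (pR r) k) *
      ((Y (pL r) - Y (pR r)) * D r + ((t : K) • Y (pL r) - Y (pR r))) := by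
  have hxy := h.comm (pR r) (pL r)
  have hxy' : ∀ z, Y (pR r) * (Y (pL r) * z) = Y (pL r) * (Y (pR r) * z) := by
    intro z; rw [← mul_assoc, hxy, mul_assoc]
  have h1 := h.Dx r
  have h2 := h.Dy r
  by_cases hk1 : k = pL r
  · subst hk1
    rw [Equiv.swap_apply_left]
    simp only [mul_add, add_mul, mul_sub, sub_mul, smul_mul_assoc, mul_smul_comm, mul_assoc,
      h1, h2, hxy, hxy']
    module
  by_cases hk2 : k = pR r
  · subst hk2
    rw [Equiv.swap_apply_right]
    simp only [mul_add, add_mul, mul_sub, sub_mul, smul_mul_assoc, mul_smul_comm, mul_assoc,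
      h1, h2, hxy, hxy']
    module
  rw [Equiv.swap_apply_of_ne_of_ne hk1 hk2]
  have h3 := h.Dk r k hk1 hk2
  have h4 := h.comm k (pL r)
  have h5 := h.comm k (pR r)
  have h4' : ∀ z, Y k * (Y (pL r) * z) = Y (pL r) * (Y k * z) := by
    intro z; rw [← mul_assoc, h4, mul_assoc]
  have h5' : ∀ z, Y k * (Y (pR r) * z) = Y (pR r) * (Y k * z) := by
    intro z; rw [← mul_assoc, h5, mul_assoc]
  simp only [mul_add, add_mul, mul_sub, sub_mul, smul_mul_assoc, mul_smul_comm, mul_assoc,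
      h3, h4, h4', h5, h5']

lemma tau_sq (h : AHD ℓ κ t Y D) (r : Fin (n - 1)) :
    ((Y (pL r) - Y (pR r)) * D r + ((t : K) • Y (pL r) - Y (pR r))) *
    ((Y (pL r) - Y (pR r)) * D r + ((t : K) • Y (pL r) - Y (pR r))) =
    ((t : K) • Y (pR r) - Y (pL r)) * ((t : K) • Y (pL r) - Y (pR r)) := by
  have hxy := h.comm (pR r) (pL r)
  have hxy' : ∀ z, Y (pR r) * (Y (pL r) * z) = Y (pL r) * (Y (pR r) * z) := by
    intro z; rw [← mul_assoc, hxy, mul_assoc]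
  have h1 := h.Dx r
  have h2 := h.Dy r
  have h1' : ∀ z, D r * (Y (pL r) * z) = (Y (pR r) * D r + Y (pR r) - (t : K) • Y (pL r)) * z := by
    intro z; rw [← mul_assoc, h1]
  have h2' : ∀ z, D r * (Y (pR r) * z) = (Y (pL r) * D r + (t : K) • Y (pL r) - Y (pR r)) * z := by
    intro z; rw [← mul_assoc, h2]
  have h3 := h.quad r
  simp only [mul_add, add_mul, mul_sub, sub_mul, smul_mul_assoc, mul_smul_comm, mul_assoc,
      h1, h2, hxy, hxy', h1', h2', h3]
  module

lemma tau_poly (h : AHD ℓ κ t Y D) (r : Fin (n - 1)) {φ : Pol K n →ₐ[K] H}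
    (hφ : ∀ k, φ (X k) = Y k) (f : Pol K n) :
    ((Y (pL r) - Y (pR r)) * D r + ((t : K) • Y (pL r) - Y (pR r))) * φ f =
    φ (rename (Equiv.swap (pL r) (pR r)) f) *
      ((Y (pL r) - Y (pR r)) * D r + ((t : K) • Y (pL r) - Y (pR r))) := by
  have h1 := tau_mul h r
  generalize ((Y (pL r) - Y (pR r)) * D r + ((t : K) • Y (pL r) - Y (pR r))) = τ at *
  induction f using MvPolynomial.induction_on with
  | C a =>
    rw [rename_C, ← algebraMap_eq, AlgHom.commutes, Algebra.commutes]
  | add p q hp hq => rw [map_add, map_add, map_add, mul_add, add_mul, hp, hq]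
  | mul_X p k hp =>
    rw [map_mul, map_mul, map_mul, rename_X, hφ, hφ, ← mul_assoc, hp, mul_assoc, h1, mul_assoc]

lemma prime_swap (h : AHD ℓ κ t Y D) (r : Fin (n - 1)) {φ : Pol K n →ₐ[K] H}
    (hφ : ∀ k, φ (X k) = Y k) (P : Ideal (Pol K n)) [P.IsPrime] (hP : RingHom.ker φ ≤ P) :
    X (pL r) - C (t : K) * X (pR r) ∈ P ∨ X (pR r) - C (t : K) * X (pL r) ∈ P ∨
      RingHom.ker φ ≤ P.comap (rename (Equiv.swap (pL r) (pR r)) : Pol K n →ₐ[K] Pol K n) := by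
  by_contra hc
  push Not at hc
  obtain ⟨h1, h2, h3⟩ := hc
  apply h3
  intro f hf
  rw [Ideal.mem_comap]
  have h4 : rename (Equiv.swap (pL r) (pR r)) f *
      ((X (pL r) - C (t : K) * X (pR r)) * (X (pR r) - C (t : K) * X (pL r))) ∈ P := by
    apply hP
    rw [RingHom.mem_ker] at hf ⊢
    have h5 := tau_poly h r hφ f
    have h6 := congrArg (· * ((Y (pL r) - Y (pR r)) * D r +
      ((t : K) • Y (pL r) - Y (pR r)))) h5
    simp only [mul_assoc, tau_sq h r] at h6
    rw [hf, zero_mul, mul_zero] at h6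
    have h7 : φ ((X (pL r) - C (t : K) * X (pR r)) * (X (pR r) - C (t : K) * X (pL r))) =
        ((t : K) • Y (pR r) - Y (pL r)) * ((t : K) • Y (pL r) - Y (pR r)) := by
      simp only [map_mul, map_sub, hφ, ← smul_eq_C_mul, map_smul]
      simp only [mul_sub, sub_mul]
      module
    rw [map_mul, h7, ← h6]
  rcases ‹P.IsPrime›.mem_or_mem h4 with h5 | h5
  · exact h5
  · rcases ‹P.IsPrime›.mem_or_mem h5 with h5 | h5
    · exact absurd h5 h1
    · exact absurd h5 h2

lemma list_prod_mem {R : Type} [CommRing R] (P : Ideal R) [hP : P.IsPrime] (f : ℕ → R)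
    (l : List ℕ) (h : (l.map f).prod ∈ P) : ∃ i ∈ l, f i ∈ P := by
  induction l with
  | nil => exact absurd ((Ideal.eq_top_iff_one P).2 h) hP.ne_top
  | cons a l ih =>
    rw [List.map_cons, List.prod_cons] at h
    rcases hP.mem_or_mem h with h | h
    · exact ⟨a, by simp, h⟩
    · obtain ⟨i, hi, h⟩ := ih h
      exact ⟨i, by simp [hi], h⟩

lemma prime_step (h : AHD ℓ κ t Y D) {φ : Pol K n →ₐ[K] H}
    (hφ : ∀ k, φ (X k) = Y k) (m : ℕ) : ∀ (k : Fin n) (_ : k.1 = m)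
    (P : Ideal (Pol K n)) [P.IsPrime] (_ : RingHom.ker φ ≤ P),
    (∃ l, l < ℓ ∧ X k - C (tp t (κ l)) ∈ P) ∨ ∃ j : Fin n, j < k ∧
      (X j - C (t : K) * X k ∈ P ∨ X k - C (t : K) * X j ∈ P) := by
  induction m with
  | zero =>
    intro k hk P _ hP
    left
    have hn : 0 < n := by have := k.2; omega
    have hk0 : k = ⟨0, hn⟩ := Fin.ext hk
    have h1 : ((List.range ℓ).map fun l => (X k - C (tp t (κ l)) : Pol K n)).prod ∈ P := by
      apply hP
      rw [RingHom.mem_ker, map_list_prod, List.map_map, ← h.cyc hn]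
      congr 2
      funext l
      simp only [Function.comp_apply, map_sub, hφ, hk0]
      rw [← algebraMap_eq, AlgHom.commutes]
    obtain ⟨l, hl, h2⟩ := list_prod_mem P _ _ h1
    exact ⟨l, by simpa using hl, h2⟩
  | succ m ih =>
    intro k hk P _ hP
    let r : Fin (n - 1) := ⟨m, by have := k.2; omega⟩
    have hr : pR r = k := Fin.ext hk.symm
    have hlt : pL r < k := by rw [Fin.lt_def]; simp only [pL, r]; omega
    rcases prime_swap h r hφ P hP with h1 | h1 | h1
    · right; exact ⟨pL r, hlt, Or.inl (by rw [← hr]; exact h1)⟩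
    · right; exact ⟨pL r, hlt, Or.inr (by rw [← hr]; exact h1)⟩
    · rcases ih (pL r) rfl _ h1 with ⟨l, hl, h2⟩ | ⟨j, hj, h2⟩
      · left
        refine ⟨l, hl, ?_⟩
        rw [Ideal.mem_comap] at h2
        simpa [hr] using h2
      · right
        refine ⟨j, hj.trans hlt, ?_⟩
        have hs : Equiv.swap (pL r) (pR r) j = j := by
          apply Equiv.swap_apply_of_ne_of_ne hj.ne
          rw [hr]; exact (hj.trans hlt).ne
        rw [Ideal.mem_comap, Ideal.mem_comap] at h2
        rw [hr] at hs
        simpa [hs, hr] using h2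

lemma prime_weight (h : AHD ℓ κ t Y D) {φ : Pol K n →ₐ[K] H}
    (hφ : ∀ k, φ (X k) = Y k) (P : Ideal (Pol K n)) [P.IsPrime] (hP : RingHom.ker φ ≤ P) :
    ∃ w ∈ Wt n ℓ κ, ∀ k, X k - C (tp t (w k)) ∈ P := by
  have key : ∀ m : ℕ, ∃ w : Fin n → ℤ, ∀ k : Fin n, k.1 < m → X k - C (tp t (w k)) ∈ P ∧
      ((∃ l, l < ℓ ∧ w k = κ l) ∨ ∃ j : Fin n, j < k ∧ (w j = w k + 1 ∨ w k = w j + 1)) := by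
    intro m
    induction m with
    | zero => exact ⟨fun _ => 0, fun k hk => absurd hk (by omega)⟩
    | succ m ih =>
      obtain ⟨w, hw⟩ := ih
      by_cases hm : m < n
      · have hz : ∃ z : ℤ, X (⟨m, hm⟩ : Fin n) - C (tp t z) ∈ P ∧ ((∃ l, l < ℓ ∧ z = κ l) ∨
            ∃ j : Fin n, j.1 < m ∧ (w j = z + 1 ∨ z = w j + 1)) := by
          rcases prime_step h hφ m ⟨m, hm⟩ rfl P hP with ⟨l, hl, h2⟩ | ⟨j, hj, h2⟩
          · exact ⟨κ l, h2, Or.inl ⟨l, hl, rfl⟩⟩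
          · have hj' : j.1 < m := hj
            have h3 := (hw j hj').1
            rcases h2 with h2 | h2
            · refine ⟨w j - 1, ?_, Or.inr ⟨j, hj', Or.inl (by ring)⟩⟩
              have h4 : tp t (w j) = t * tp t (w j - 1) := by rw [← tp_succ]; congr 1; ring
              have h5 : C ((t : K)⁻¹) * C (t : K) = (1 : Pol K n) := by
                rw [← C_mul, inv_mul_cancel₀ (Units.ne_zero t), C_1]
              have h6 : X (⟨m, hm⟩ : Fin n) - C (tp t (w j - 1)) = C ((t : K)⁻¹) *
                  ((X j - C (tp t (w j))) - (X j - C (t : K) * X (⟨m, hm⟩ : Fin n))) := by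
                rw [h4, C_mul]
                linear_combination -(X (⟨m, hm⟩ : Fin n) - C (tp t (w j - 1))) * h5
              rw [h6]
              exact P.mul_mem_left _ (P.sub_mem h3 h2)
            · refine ⟨w j + 1, ?_, Or.inr ⟨j, hj', Or.inr (by ring)⟩⟩
              have h6 : X (⟨m, hm⟩ : Fin n) - C (tp t (w j + 1)) = C (t : K) *
                  (X j - C (tp t (w j))) + (X (⟨m, hm⟩ : Fin n) - C (t : K) * X j) := by
                rw [tp_succ, C_mul]; ring
              rw [h6]
              exact P.add_mem (P.mul_mem_left _ h3) h2
        obtain ⟨z, hz1, hz2⟩ := hz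
        refine ⟨fun k => if k.1 < m then w k else z, fun k hk => ?_⟩
        by_cases hk' : k.1 < m
        · refine ⟨by simpa [hk'] using (hw k hk').1, ?_⟩
          rcases (hw k hk').2 with h2 | ⟨j, hj, h2⟩
          · left; simpa [hk'] using h2
          · right
            have : j.1 < m := lt_trans hj hk'
            exact ⟨j, hj, by simpa [hk', this] using h2⟩
        · have hkm : k = ⟨m, hm⟩ := Fin.ext (by simp; omega)
          subst hkm
          refine ⟨by simpa using hz1, ?_⟩
          rcases hz2 with h2 | ⟨j, hj, h2⟩
          · left; simpa using h2
          · right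
            exact ⟨j, hj, by simpa [hj] using h2⟩
      · exact ⟨w, fun k hk => hw k (by have := k.2; omega)⟩
  obtain ⟨w, hw⟩ := key n
  exact ⟨w, wt_of_step (fun k => (hw k k.2).2), fun k => (hw k k.2).1⟩

/-- The maximal ideal of the point `(t ^ w_k)`. -/
noncomputable def mw (t : Kˣ) (w : Fin n → ℤ) : Ideal (Pol K n) :=
  RingHom.ker (eval (fun k => tp t (w k)))

lemma mw_le (w : Fin n → ℤ) (P : Ideal (Pol K n)) (h : ∀ k, X k - C (tp t (w k)) ∈ P) :
    mw t w ≤ P := by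
  have h1 : (Ideal.Quotient.mk P) =
      ((Ideal.Quotient.mk P).comp C).comp (eval (fun k => tp t (w k))) := by
    apply MvPolynomial.ringHom_ext
    · intro a; simp
    · intro k
      simp only [RingHom.comp_apply, eval_X]
      exact Ideal.Quotient.eq.2 (h k)
  intro f hf
  have h2 := RingHom.congr_fun h1 f
  rw [mw, RingHom.mem_ker] at hf
  rw [RingHom.comp_apply, hf, map_zero] at h2
  exact Ideal.Quotient.eq_zero_iff_mem.1 h2

lemma inf_pow_le (h : AHD ℓ κ t Y D) {φ : Pol K n →ₐ[K] H}
    (hφ : ∀ k, φ (X k) = Y k) :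
    ∃ N, (⨅ w : Wt n ℓ κ, mw t w.1) ^ N ≤ RingHom.ker φ := by
  apply Ideal.exists_pow_le_of_le_radical_of_fg
  · rw [Ideal.radical_eq_sInf]
    apply le_sInf
    rintro P ⟨hP, hP2⟩
    obtain ⟨w, hw, hw2⟩ := prime_weight h hφ P hP
    exact (iInf_le _ (⟨w, hw⟩ : Wt n ℓ κ)).trans (mw_le w P hw2)
  · exact IsNoetherian.noetherian _

end primes

end LE
end Paper

namespace Paper
namespace LE

/-! ### The evaluation map -/

section evaluation

open MvPolynomial

variable {K : Type} [Field K] {n ℓ : ℕ} {κ : ℕ → ℤ} {e : ℕ}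

lemma mw_coprime (he : ∀ k l, k < ℓ → l < ℓ → (n : ℤ) + κ k - κ l < (e : ℤ))
    {t : Kˣ} (ht : Good e t) (N : ℕ) :
    Pairwise (Function.onFun IsCoprime (fun w : Wt n ℓ κ => (mw t w.1) ^ N)) := by
  intro w w' hne
  apply IsCoprime.pow
  have h1 : ∃ k, tp t (w.1 k) ≠ tp t (w'.1 k) := by
    by_contra hc
    push Not at hc
    apply hne
    apply Subtype.ext
    exact wt_inj he w.2 w'.2 (fun k => good_dvd ht (hc k).symm)
  obtain ⟨k, hk⟩ := h1
  rw [Ideal.isCoprime_iff_exists]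
  set a := tp t (w.1 k)
  set b := tp t (w'.1 k)
  refine ⟨C ((b - a)⁻¹) * (X k - C a), ?_, - C ((b - a)⁻¹) * (X k - C b), ?_, ?_⟩
  · apply Ideal.mul_mem_left
    simp [mw, RingHom.mem_ker, a]
  · apply Ideal.mul_mem_left
    simp [mw, RingHom.mem_ker, b]
  · have h2 : C ((b - a)⁻¹) * (C b - C a) = (1 : Pol K n) := by
      rw [← C_sub, ← C_mul, inv_mul_cancel₀ (sub_ne_zero.2 hk.symm), C_1]
    linear_combination h2

/-- Rescaling of the variables. -/
noncomputable def resc (t : Kˣ) (w : Fin n → ℤ) : Pol K n →+* Pol K n :=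
  eval₂Hom C (fun k => C (tp t (w k)) * X k)

lemma resc_C (t : Kˣ) (w : Fin n → ℤ) (a : K) : resc (n := n) t w (C a) = C a := by
  simp [resc]

lemma resc_X (t : Kˣ) (w : Fin n → ℤ) (k : Fin n) :
    resc t w (X k) = C (tp t (w k)) * X k := by
  simp [resc]

lemma resc_resc (t : Kˣ) (w : Fin n → ℤ) (p : Pol K n) : resc t w (resc t (-w) p) = p := by
  have : (resc t w).comp (resc t (-w)) = RingHom.id (Pol K n) := by
    apply MvPolynomial.ringHom_ext
    · intro a; simp [resc_C]
    · intro k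
      rw [RingHom.comp_apply, resc_X, map_mul, resc_C, resc_X, ← mul_assoc, ← C_mul, Pi.neg_apply,
        tp_neg]
      simp
  exact RingHom.congr_fun this p

lemma eval_resc_neg (t : Kˣ) (w : Fin n → ℤ) (p : Pol K n) :
    eval (fun k => tp t (w k)) (resc t (-w) p) = eval (fun _ => 1) p := by
  have : (eval (fun k => tp t (w k))).comp (resc t (-w)) = eval (fun _ => (1 : K)) := by
    apply MvPolynomial.ringHom_ext
    · intro a; simp [resc_C]
    · intro k
      rw [RingHom.comp_apply, resc_X]
      simp [tp_neg]
  exact RingHom.congr_fun this p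

lemma eval_resc (t : Kˣ) (w : Fin n → ℤ) (p : Pol K n) :
    eval (fun _ => 1) (resc t w p) = eval (fun k => tp t (w k)) p := by
  have : (eval (fun _ => 1)).comp (resc t w) = eval (fun k => tp t (w k)) := by
    apply MvPolynomial.ringHom_ext
    · intro a; simp [resc_C]
    · intro k
      rw [RingHom.comp_apply, resc_X]
      simp
  exact RingHom.congr_fun this p

lemma unit_mod (t : Kˣ) (w : Fin n → ℤ) (N : ℕ) (a : Pol K n)
    (ha : eval (fun k => tp t (w k)) a ≠ 0) :
    IsUnit (Ideal.Quotient.mk ((mw t w) ^ N) a) := by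
  set c := eval (fun k => tp t (w k)) a with hc
  have h1 : a = C c + (a - C c) := by ring
  rw [h1, map_add]
  apply IsNilpotent.isUnit_add_left_of_commute _ _ (Commute.all _ _)
  · refine ⟨N, ?_⟩
    rw [← map_pow]
    apply Ideal.Quotient.eq_zero_iff_mem.2
    apply Ideal.pow_mem_pow
    simp [mw, RingHom.mem_ker, ← hc]
  · exact ((IsUnit.mk0 c ha).map C).map _

/-- The local expansion at the weight `w`. -/
noncomputable def epsw (t : Kˣ) (w : Fin n → ℤ) (N : ℕ) : Oo K n →+* Pol K n ⧸ (mw t w) ^ N :=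
  IsLocalization.lift (M := Mloc K n) (S := Oo K n)
    (g := (Ideal.Quotient.mk ((mw t w) ^ N)).comp (resc t (-w))) (by
      intro y
      rw [RingHom.comp_apply]
      apply unit_mod
      rw [eval_resc_neg]
      exact (mem_Mloc K n _).1 y.2)

lemma epsw_alg (t : Kˣ) (w : Fin n → ℤ) (N : ℕ) (p : Pol K n) :
    epsw t w N (algebraMap _ _ p) = Ideal.Quotient.mk ((mw t w) ^ N) (resc t (-w) p) := by
  rw [epsw, IsLocalization.lift_eq]; rfl

lemma epsw_mO (t : Kˣ) (w : Fin n → ℤ) (N : ℕ) {f : Oo K n} (hf : f ∈ mO K n ^ N) :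
    epsw t w N f = 0 := by
  suffices h : mO K n ^ N ≤ RingHom.ker (epsw t w N) from h hf
  rw [mO, ← Ideal.map_pow, Ideal.map_le_iff_le_comap]
  intro p hp
  rw [Ideal.mem_comap, RingHom.mem_ker, epsw_alg, Ideal.Quotient.eq_zero_iff_mem]
  have h1 : (aug K n) ^ N ≤ ((mw t w) ^ N).comap (resc t (-w)) := by
    rw [← Ideal.map_le_iff_le_comap, Ideal.map_pow]
    apply Ideal.pow_right_mono
    rw [Ideal.map_le_iff_le_comap]
    intro q hq
    rw [Ideal.mem_comap, mw, RingHom.mem_ker, eval_resc_neg]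
    exact hq
  exact h1 hp

lemma ev_ex (hℓ : 1 ≤ ℓ) (he : ∀ k l, k < ℓ → l < ℓ → (n : ℤ) + κ k - κ l < (e : ℤ))
    {t : Kˣ} (ht : Good e t) {H : Type} [Ring H] [Algebra K H] {Y : Fin n → H}
    {D : Fin (n - 1) → H} (h : AHD ℓ κ t Y D) :
    ∃ (ev : RR K n ℓ κ →+* H) (N : ℕ), (∀ k, ev (xx ℓ κ t k) = Y k) ∧
      (∀ a, ev (cst K n ℓ κ a) = algebraMap K H a) ∧
      (∀ f, (∀ w, f w ∈ mO K n ^ N) → ev f = 0) := by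
  obtain ⟨φ, hφ⟩ := evQ_ex (K := K) h.comm
  obtain ⟨N, hN⟩ := inf_pow_le h hφ
  let _ : Fintype (Wt n ℓ κ) := (wt_finite hℓ he).fintype
  have hcop := mw_coprime (ℓ := ℓ) (κ := κ) he ht
  have hle : (⨅ w : Wt n ℓ κ, (mw t w.1) ^ N) ≤ RingHom.ker φ := by
    have h1 : ∏ w : Wt n ℓ κ, (mw t w.1) ^ N = ⨅ w ∈ Finset.univ, (mw t (w : Wt n ℓ κ).1) ^ N :=
      Ideal.prod_eq_iInf_of_pairwise_isCoprime (fun i _ j _ hij => hcop N hij)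
    have h2 : ∏ w : Wt n ℓ κ, (mw t w.1) ^ 1 = ⨅ w ∈ Finset.univ, (mw t (w : Wt n ℓ κ).1) ^ 1 :=
      Ideal.prod_eq_iInf_of_pairwise_isCoprime (fun i _ j _ hij => hcop 1 hij)
    simp only [Finset.mem_univ, iInf_pos, pow_one] at h1 h2
    rw [← h1, Finset.prod_pow, h2]
    exact hN
  let crt := Ideal.quotientInfRingEquivPiQuotient _ (hcop N)
  have hcrt : ∀ p : Pol K n, crt.symm (fun w => Ideal.Quotient.mk _ p) = Ideal.Quotient.mk _ p := by
    intro p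
    rw [RingEquiv.symm_apply_eq]
    rfl
  let lft : (Pol K n ⧸ ⨅ w : Wt n ℓ κ, (mw t w.1) ^ N) →+* H :=
    Ideal.Quotient.lift _ (φ : Pol K n →+* H) (fun a ha => hle ha)
  let loc : RR K n ℓ κ →+* ∀ w : Wt n ℓ κ, Pol K n ⧸ (mw t w.1) ^ N :=
    RingHom.pi (fun w => (epsw t w.1 N).comp (Pi.evalRingHom _ w))
  refine ⟨lft.comp ((crt.symm : _ →+* _).comp loc), N, ?_, ?_, ?_⟩
  · intro k
    have h1 : loc (xx ℓ κ t k) = fun w => Ideal.Quotient.mk _ (X k) := by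
      funext w
      change epsw t w.1 N (xx ℓ κ t k w) = _
      rw [xx_apply, cO, uu, RingHom.comp_apply, ← map_mul, epsw_alg, map_mul, resc_C, resc_X,
        ← mul_assoc, ← C_mul, mul_comm (tp _ _), Pi.neg_apply, tp_neg]
      simp
    change lft (crt.symm (loc (xx ℓ κ t k))) = _
    rw [h1, hcrt, ← hφ]
    rfl
  · intro a
    have h1 : loc (cst K n ℓ κ a) = fun w => Ideal.Quotient.mk _ (C a) := by
      funext w
      change epsw t w.1 N (cst K n ℓ κ a w) = _
      rw [cst_apply, cO, RingHom.comp_apply, epsw_alg, resc_C]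
    change lft (crt.symm (loc (cst K n ℓ κ a))) = _
    rw [h1, hcrt, ← φ.commutes]
    rfl
  · intro f hf
    have h1 : loc f = 0 := by
      funext w
      exact epsw_mO t w.1 N (hf w)
    change lft (crt.symm (loc f)) = _
    rw [h1, map_zero, map_zero]

/-- Polynomials in the elements `xx t k`. -/
noncomputable def iot (t : Kˣ) : Pol K n →+* RR K n ℓ κ :=
  eval₂Hom (cst K n ℓ κ) (fun k => xx ℓ κ t k)

lemma iot_apply (t : Kˣ) (p : Pol K n) (w : Wt n ℓ κ) :
    iot t p w = algebraMap (Pol K n) (Oo K n) (resc t w.1 p) := by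
  have : (Pi.evalRingHom _ w).comp (iot t) =
      (algebraMap (Pol K n) (Oo K n)).comp (resc t w.1) := by
    apply MvPolynomial.ringHom_ext
    · intro a
      simp only [RingHom.comp_apply, resc_C, iot, coe_eval₂Hom, eval₂_C]
      rfl
    · intro k
      simp only [RingHom.comp_apply, resc_X, iot, coe_eval₂Hom, eval₂_X, map_mul]
      rfl
  exact RingHom.congr_fun this p

lemma density (hℓ : 1 ≤ ℓ) (he : ∀ k l, k < ℓ → l < ℓ → (n : ℤ) + κ k - κ l < (e : ℤ))
    {t : Kˣ} (ht : Good e t) (M : ℕ) (f : RR K n ℓ κ) :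
    ∃ q : Pol K n, ∀ w, (f - iot (ℓ := ℓ) (κ := κ) t q) w ∈ mO K n ^ M := by
  let _ : Fintype (Wt n ℓ κ) := (wt_finite hℓ he).fintype
  choose p hp using fun w => dens K n M (f w)
  obtain ⟨q, hq⟩ := Ideal.exists_forall_sub_mem_ideal (mw_coprime (ℓ := ℓ) (κ := κ) he ht M)
    (fun w => resc t (-w.1) (p w))
  refine ⟨q, fun w => ?_⟩
  have h1 : (f - iot (ℓ := ℓ) (κ := κ) t q) w = (f w - algebraMap (Pol K n) (Oo K n) (p w)) -
      algebraMap (Pol K n) (Oo K n) (resc t w.1 (q - resc t (-w.1) (p w))) := by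
    rw [Pi.sub_apply, iot_apply, map_sub, resc_resc, map_sub]
    ring
  rw [h1]
  apply Ideal.sub_mem _ (hp w)
  rw [mO, ← Ideal.map_pow]
  apply Ideal.mem_map_of_mem
  have h2 : (mw t w.1) ^ M ≤ ((aug K n) ^ M).comap (resc t w.1) := by
    rw [← Ideal.map_le_iff_le_comap, Ideal.map_pow]
    apply Ideal.pow_right_mono
    rw [Ideal.map_le_iff_le_comap]
    intro q hq
    rw [Ideal.mem_comap, aug, RingHom.mem_ker, eval_resc]
    exact hq
  exact h2 (hq w)

/-- Induction principle for additive closed properties. -/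
lemma dens_induction (hℓ : 1 ≤ ℓ) (he : ∀ k l, k < ℓ → l < ℓ → (n : ℤ) + κ k - κ l < (e : ℤ))
    {t : Kˣ} (ht : Good e t) (M : ℕ) {p : RR K n ℓ κ → Prop}
    (hc : ∀ a, p (cst K n ℓ κ a)) (hx : ∀ k, p (xx ℓ κ t k)) (ha : ∀ f g, p f → p g → p (f + g))
    (hm : ∀ f g, p f → p g → p (f * g)) (hM : ∀ f, (∀ w, f w ∈ mO K n ^ M) → p f)
    (f : RR K n ℓ κ) : p f := by
  obtain ⟨q, hq⟩ := density hℓ he ht M f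
  have h1 : f = (f - iot t q) + iot t q := by ring
  rw [h1]
  apply ha _ _ (hM _ hq)
  clear hq h1
  induction q using MvPolynomial.induction_on with
  | C a => simpa [iot] using hc a
  | add p q hp hq => rw [map_add]; exact ha _ _ hp hq
  | mul_X q k h =>
    rw [map_mul]
    apply hm _ _ h
    simpa [iot] using hx k

/-- The properties of the evaluation map. -/
structure EV {H : Type} [Ring H] [Algebra K H] (t : Kˣ) (Y : Fin n → H) (D : Fin (n - 1) → H)
    (ev : RR K n ℓ κ →+* H) (N : ℕ) : Prop where
  x : ∀ k, ev (xx ℓ κ t k) = Y k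
  c : ∀ a, ev (cst K n ℓ κ a) = algebraMap K H a
  van : ∀ f, (∀ w, f w ∈ mO K n ^ N) → ev f = 0
  rel : ∀ r f g, (xx ℓ κ t (pL r) - xx ℓ κ t (pR r)) * g =
    (cst K n ℓ κ t * xx ℓ κ t (pL r) - xx ℓ κ t (pR r)) *
      (act K n ℓ κ (Equiv.swap (pL r) (pR r)) f - f) →
    D r * ev f = ev (act K n ℓ κ (Equiv.swap (pL r) (pR r)) f) * D r + ev g

lemma EV_ex (hℓ : 1 ≤ ℓ) (he : ∀ k l, k < ℓ → l < ℓ → (n : ℤ) + κ k - κ l < (e : ℤ))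
    {t : Kˣ} (ht : Good e t) {H : Type} [Ring H] [Algebra K H] {Y : Fin n → H}
    {D : Fin (n - 1) → H} (h : AHD ℓ κ t Y D) :
    ∃ (ev : RR K n ℓ κ →+* H) (N : ℕ), EV t Y D ev N := by
  obtain ⟨ev, N, hx, hc, hv⟩ := ev_ex hℓ he ht h
  refine ⟨ev, N, hx, hc, hv, ?_⟩
  intro r
  have hLR := pL_ne_pR r
  obtain ⟨Δ, hΔ, hΔM⟩ := Delta_ex (K := K) (ℓ := ℓ) (κ := κ) he ht hLR
  suffices hs : ∀ f, D r * ev f =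
      ev (act K n ℓ κ (Equiv.swap (pL r) (pR r)) f) * D r + ev (Δ f) by
    intro f g hg
    have : g = Δ f := xx_cancel t hLR (by rw [hg, hΔ])
    rw [this]; exact hs f
  have hu : ∀ f g, (xx ℓ κ t (pL r) - xx ℓ κ t (pR r)) * g =
      (cst K n ℓ κ t * xx ℓ κ t (pL r) - xx ℓ κ t (pR r)) *
      (act K n ℓ κ (Equiv.swap (pL r) (pR r)) f - f) → Δ f = g := by
    intro f g hg
    exact xx_cancel t hLR (by rw [hg, hΔ])
  refine dens_induction hℓ he ht (N + 1) (p := fun f => D r * ev f =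
    ev (act K n ℓ κ (Equiv.swap (pL r) (pR r)) f) * D r + ev (Δ f)) ?_ ?_ ?_ ?_ ?_
  · intro a
    rw [hu (cst K n ℓ κ a) 0 (by rw [act_cst]; ring), act_cst, hc, map_zero, add_zero,
      Algebra.commutes]
  · intro k
    by_cases hk1 : k = pL r
    · subst hk1
      rw [hu _ (xx ℓ κ t (pR r) - cst K n ℓ κ t * xx ℓ κ t (pL r))
        (by rw [act_xx, Equiv.swap_apply_left]; ring), act_xx, Equiv.swap_apply_left]
      simp only [map_sub, map_mul, hx, hc, h.Dx]
      rw [Algebra.smul_def]; abel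
    by_cases hk2 : k = pR r
    · subst hk2
      rw [hu _ (cst K n ℓ κ t * xx ℓ κ t (pL r) - xx ℓ κ t (pR r))
        (by rw [act_xx, Equiv.swap_apply_right]; ring), act_xx, Equiv.swap_apply_right]
      simp only [map_sub, map_mul, hx, hc, h.Dy]
      rw [Algebra.smul_def]; abel
    have hs := Equiv.swap_apply_of_ne_of_ne hk1 hk2
    rw [hu _ 0 (by rw [act_xx, hs]; ring), act_xx, hs, hx, map_zero, add_zero, h.Dk r k hk1 hk2]
  · intro f g hf hg
    rw [hu (f + g) (Δ f + Δ g) (by rw [mul_add, hΔ, hΔ, map_add]; ring)]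
    simp only [map_add, mul_add, hf, hg, add_mul]
    abel
  · intro f g hf hg
    rw [hu (f * g) (act K n ℓ κ (Equiv.swap (pL r) (pR r)) f * Δ g + Δ f * g)
      (by
        rw [map_mul]
        linear_combination (act K n ℓ κ (Equiv.swap (pL r) (pR r)) f) * hΔ g + g * hΔ f)]
    simp only [map_add, map_mul]
    rw [← mul_assoc, hf, add_mul, mul_assoc, hg]
    simp only [mul_add, mul_assoc]
    abel
  · intro f hf
    have hle : mO K n ^ (N + 1) ≤ mO K n ^ N := Ideal.pow_le_pow_right (Nat.le_succ N)
    rw [hv f (fun w => hle (hf w)), hv (act K n ℓ κ (Equiv.swap (pL r) (pR r)) f)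
        (fun w => hle (sig_mO K n _ _ (hf _))),
      hv _ (hΔM f N hf)]
    simp

end evaluation

end LE
end Paper

set_option linter.unusedSimpArgs false
namespace Paper
namespace LE

/-! ### Changing the parameter -/

section identities

variable {R : Type*} [CommRing R] [IsDomain R]

lemma id_quad {t t' x y x' y' a b g : R} (h1 : x - y ≠ 0) (h1' : x' - y' ≠ 0)
    (ha : (t * x - y) * ((x' - y') * a) = (t' * x' - y') * (x - y))
    (hb : (t * y - x) * ((y' - x') * b) = (t' * y' - x') * (y - x))
    (hg : (x - y) * g = (t * x - y) * (b - a)) :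
    -(1 + t) * b + g = -(1 + t') := by
  apply mul_left_cancel₀ (mul_ne_zero h1 h1')
  linear_combination (x' - y') * hg - ha - hb

lemma id_braid {t t' x y z x' y' z' a b c a' α β β1 β2 : R} (h1 : x - y ≠ 0) (h1' : x' - y' ≠ 0)
    (h2 : y - z ≠ 0) (h2' : y' - z' ≠ 0) (h3 : x - z ≠ 0) (h3' : x' - z' ≠ 0)
    (ha : (t * x - y) * ((x' - y') * a) = (t' * x' - y') * (x - y))
    (hb : (t * x - z) * ((x' - z') * b) = (t' * x' - z') * (x - z))
    (hc : (t * y - z) * ((y' - z') * c) = (t' * y' - z') * (y - z))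
    (ha' : (t * y - x) * ((y' - x') * a') = (t' * y' - x') * (y - x))
    (hα : (x - y) * α = (t * x - y) * (b - c))
    (hβ : (y - z) * β = (t * y - z) * (b - a))
    (hβ1 : (x - z) * β1 = (t * x - z) * (c - a'))
    (hβ2 : (x - y) * β2 = (t * x - y) * (β1 - β)) :
    -(1 + t) * (b * β1) + b * β2 + α * β = t' - t * (b * c) := by
  have e1 : (x - y) * (-(1 + t) * (b * β1) + b * β2 + α * β) =
      b * (t * y - x) * β1 - (t * x - y) * c * β := by
    linear_combination b * hβ2 + β * hα
  have e2 : (x - y) * (y - z) * (x - z) * (-(1 + t) * (b * β1) + b * β2 + α * β) =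
      (x - y) * (y - z) * (x - z) * (-(t * (b * c))) - (y - z) * ((t * x - z) * b * ((t * y - x) * a'))
        + (x - z) * ((t * x - y) * a * ((t * y - z) * c))
        - (x - y) * ((t * y - z) * c * ((t * x - z) * b)) := by
    linear_combination (y - z) * (x - z) * e1 + b * (t * y - x) * (y - z) * hβ1
      - (t * x - y) * c * (x - z) * hβ
  apply mul_left_cancel₀ (mul_ne_zero (mul_ne_zero (mul_ne_zero h1 h2) h3)
    (mul_ne_zero (mul_ne_zero h1' h2') h3'))
  linear_combination (x' - y') * (y' - z') * (x' - z') * e2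
    + (y - z) * (y' - z') * ((t * x - z) * ((x' - z') * b)) * ha'
    + (y - z) * (y' - z') * ((t' * y' - x') * (y - x)) * hb
    + (x - z) * (x' - z') * ((t * x - y) * ((x' - y') * a)) * hc
    + (x - z) * (x' - z') * ((t' * y' - z') * (y - z)) * ha
    - (x - y) * (x' - y') * ((t * y - z) * ((y' - z') * c)) * hb
    - (x - y) * (x' - y') * ((t' * x' - z') * (x - z)) * hc

lemma id_braid' {t t' x y z x' y' z' a b c c' α β γ1 γ2 : R} (h1 : x - y ≠ 0) (h1' : x' - y' ≠ 0)
    (h2 : y - z ≠ 0) (h2' : y' - z' ≠ 0) (h3 : x - z ≠ 0) (h3' : x' - z' ≠ 0)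
    (ha : (t * x - y) * ((x' - y') * a) = (t' * x' - y') * (x - y))
    (hb : (t * x - z) * ((x' - z') * b) = (t' * x' - z') * (x - z))
    (hc : (t * y - z) * ((y' - z') * c) = (t' * y' - z') * (y - z))
    (hc' : (t * z - y) * ((z' - y') * c') = (t' * z' - y') * (z - y))
    (hα : (x - y) * α = (t * x - y) * (b - c))
    (hβ : (y - z) * β = (t * y - z) * (b - a))
    (hγ1 : (x - z) * γ1 = (t * x - z) * (a - c'))
    (hγ2 : (y - z) * γ2 = (t * y - z) * (γ1 - α)) :
    -(1 + t) * (b * γ1) + b * γ2 + β * α = t' - t * (b * a) := by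
  have e1 : (y - z) * (-(1 + t) * (b * γ1) + b * γ2 + β * α) =
      b * (t * z - y) * γ1 - (t * y - z) * a * α := by
    linear_combination b * hγ2 + α * hβ
  have e2 : (x - y) * (y - z) * (x - z) * (-(1 + t) * (b * γ1) + b * γ2 + β * α) =
      (x - y) * (y - z) * (x - z) * (-(t * (b * a))) - (x - y) * ((t * x - z) * b * ((t * z - y) * c'))
        + (x - z) * ((t * x - y) * a * ((t * y - z) * c))
        - (y - z) * ((t * x - y) * a * ((t * x - z) * b)) := by
    linear_combination (x - y) * (x - z) * e1 + b * (t * z - y) * (x - y) * hγ1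
      - (t * y - z) * a * (x - z) * hα
  apply mul_left_cancel₀ (mul_ne_zero (mul_ne_zero (mul_ne_zero h1 h2) h3)
    (mul_ne_zero (mul_ne_zero h1' h2') h3'))
  linear_combination (x' - y') * (y' - z') * (x' - z') * e2
    + (x - y) * (x' - y') * ((t * x - z) * ((x' - z') * b)) * hc'
    + (x - y) * (x' - y') * ((t' * z' - y') * (z - y)) * hb
    + (x - z) * (x' - z') * ((t * x - y) * ((x' - y') * a)) * hc
    + (x - z) * (x' - z') * ((t' * y' - z') * (y - z)) * ha
    - (y - z) * (y' - z') * ((t * x - y) * ((x' - y') * a)) * hb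
    - (y - z) * (y' - z') * ((t' * x' - z') * (x - z)) * ha

end identities

lemma braid_half {K R H : Type} [Field K] [CommRing R] [Ring H] [Algebra K H] (ev : R →+* H)
    (cs : K → R) (hcs : ∀ k, ev (cs k) = algebraMap K H k) (D1 D2 : H)
    (a b c α β β1 β2 : R) (τ τ' : K)
    (h1 : D1 * ev c = ev b * D1 + ev α) (h2 : D1 * ev b = ev c * D1 - ev α)
    (h3 : D2 * ev a = ev b * D2 + ev β) (h4 : D1 * ev β = ev β1 * D1 + ev β2)
    (q : D1 * D1 = (-(1 + τ)) • D1)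
    (hid : -(1 + cs τ) * (b * β1) + b * β2 + α * β = cs τ' - cs τ * (b * c)) :
    (ev a * D1) * (ev c * D2) * (ev a * D1) - τ' • (ev a * D1) =
      ev (a * b * c) * (D1 * D2 * D1 - τ • D1) := by
  have hid' : ev b * ev β2 = ev (cs τ') - ev (cs τ) * (ev b * ev c) + (1 + ev (cs τ)) * (ev b * ev β1)
      - ev α * ev β := by
    have := congrArg ev hid
    simp only [map_add, map_sub, map_mul, map_neg, map_one] at this
    rw [← this]; noncomm_ring
  have cab : ev b * ev α = ev α * ev b := by rw [← map_mul, mul_comm, map_mul]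
  have e1 : (ev a * D1) * (ev c * D2) * (ev a * D1) =
      ev a * ((D1 * ev c) * (D2 * ev a)) * D1 := by noncomm_ring
  have e2 : (D1 * ev c) * (D2 * ev a) * D1 = ev b * (D1 * ev b) * D2 * D1
      + ev b * (D1 * ev β) * D1 + ev α * ev b * D2 * D1 + ev α * ev β * D1 := by
    rw [h1, h3]; noncomm_ring
  have e3 : (D1 * ev c) * (D2 * ev a) * D1 = ev b * ev c * (D1 * D2 * D1) +
      ev b * ev β1 * (D1 * D1) + (ev b * ev β2) * D1 + ev α * ev β * D1 := by
    rw [e2, h2, h4, mul_sub, cab]; noncomm_ring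
  rw [e1, mul_assoc, e3, hid', q, map_mul, map_mul, hcs, hcs]
  simp only [← Algebra.smul_def, mul_add, add_mul, mul_sub, sub_mul, smul_mul_assoc,
    mul_smul_comm, mul_assoc, one_mul, Algebra.algebraMap_eq_smul_one, mul_one]
  module

section transfer

variable {K : Type} [Field K] {n ℓ : ℕ} {κ : ℕ → ℤ} {e : ℕ}

/-- The defining property of the factors relating the two algebras. -/
def IsTheta (t t' : Kˣ) (θ : Fin n → Fin n → RR K n ℓ κ) : Prop :=
  ∀ i j, (cst K n ℓ κ t * xx ℓ κ t i - xx ℓ κ t j) * ((xx ℓ κ t' i - xx ℓ κ t' j) * θ i j) =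
      (cst K n ℓ κ t' * xx ℓ κ t' i - xx ℓ κ t' j) * (xx ℓ κ t i - xx ℓ κ t j)

lemma theta_act {t t' : Kˣ} {θ : Fin n → Fin n → RR K n ℓ κ} (hθ : IsTheta t t' θ)
    (π : Equiv.Perm (Fin n)) {i j : Fin n} (hij : i ≠ j) :
    act K n ℓ κ π (θ i j) = θ (π i) (π j) := by
  have h := congrArg (act K n ℓ κ π) (hθ i j)
  simp only [map_mul, map_sub, act_xx, act_cst] at h
  have hij' : π i ≠ π j := fun h => hij (π.injective h)
  exact xx_cancel t' hij' (txx_cancel t hij' (h.trans (hθ _ _).symm))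

lemma theta_inv {t t' : Kˣ} {θ θ' : Fin n → Fin n → RR K n ℓ κ} (hθ : IsTheta t t' θ)
    (hθ' : IsTheta t' t θ') {i j : Fin n} (hij : i ≠ j) : θ i j * θ' i j = 1 := by
  apply xx_cancel t' hij
  apply xx_cancel t hij
  apply txx_cancel t hij
  apply txx_cancel t' hij
  linear_combination (cst K n ℓ κ t' * xx ℓ κ t' i - xx ℓ κ t' j) *
    (xx ℓ κ t i - xx ℓ κ t j) * θ' i j * hθ i j +
    (cst K n ℓ κ t' * xx ℓ κ t' i - xx ℓ κ t' j) * (xx ℓ κ t i - xx ℓ κ t j) * hθ' i j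

lemma ahd_transfer (he : ∀ k l, k < ℓ → l < ℓ → (n : ℤ) + κ k - κ l < (e : ℤ))
    {t t' : Kˣ} (ht : Good e t) {H : Type} [Ring H] [Algebra K H]
    {Y : Fin n → H} {D : Fin (n - 1) → H} (h : AHD ℓ κ t Y D)
    {ev : RR K n ℓ κ →+* H} {N : ℕ} (hev : EV t Y D ev N)
    {θ : Fin n → Fin n → RR K n ℓ κ} (hθ : IsTheta t t' θ) :
    AHD ℓ κ t' (fun k => ev (xx ℓ κ t' k)) (fun r => ev (θ (pL r) (pR r)) * D r) where
  comm k m := by simp only [← map_mul, mul_comm]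
  Dx r := by
    have hLR := pL_ne_pR r
    obtain ⟨Δ, hΔ, -⟩ := Delta_ex (K := K) (ℓ := ℓ) (κ := κ) he ht hLR
    have h1 := hev.rel r _ _ (hΔ (xx ℓ κ t' (pL r)))
    have h2 := hΔ (xx ℓ κ t' (pL r))
    rw [act_xx, Equiv.swap_apply_left] at h1 h2
    have h3 : θ (pL r) (pR r) * Δ (xx ℓ κ t' (pL r)) =
        xx ℓ κ t' (pR r) - cst K n ℓ κ t' * xx ℓ κ t' (pL r) := by
      apply xx_cancel t hLR
      linear_combination θ (pL r) (pR r) * h2 - hθ (pL r) (pR r)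
    have h4 : ev (θ (pL r) (pR r)) * ev (xx ℓ κ t' (pR r)) =
      ev (xx ℓ κ t' (pR r)) * ev (θ (pL r) (pR r)) := by rw [← map_mul, mul_comm, map_mul]
    rw [mul_assoc, h1, mul_add, ← map_mul, h3, ← mul_assoc, h4, map_sub, map_mul, hev.c,
      Algebra.smul_def, mul_assoc]
    abel
  Dy r := by
    have hLR := pL_ne_pR r
    obtain ⟨Δ, hΔ, -⟩ := Delta_ex (K := K) (ℓ := ℓ) (κ := κ) he ht hLR
    have h1 := hev.rel r _ _ (hΔ (xx ℓ κ t' (pR r)))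
    have h2 := hΔ (xx ℓ κ t' (pR r))
    rw [act_xx, Equiv.swap_apply_right] at h1 h2
    have h3 : θ (pL r) (pR r) * Δ (xx ℓ κ t' (pR r)) =
        cst K n ℓ κ t' * xx ℓ κ t' (pL r) - xx ℓ κ t' (pR r) := by
      apply xx_cancel t hLR
      linear_combination θ (pL r) (pR r) * h2 + hθ (pL r) (pR r)
    have h4 : ev (θ (pL r) (pR r)) * ev (xx ℓ κ t' (pL r)) =
      ev (xx ℓ κ t' (pL r)) * ev (θ (pL r) (pR r)) := by rw [← map_mul, mul_comm, map_mul]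
    rw [mul_assoc, h1, mul_add, ← map_mul, h3, ← mul_assoc, h4, map_sub, map_mul, hev.c,
      Algebra.smul_def, mul_assoc]
    abel
  Dk r k hk1 hk2 := by
    have hs := Equiv.swap_apply_of_ne_of_ne hk1 hk2
    have h1 := hev.rel r (xx ℓ κ t' k) 0 (by rw [act_xx, hs]; ring)
    rw [act_xx, hs, map_zero, add_zero] at h1
    rw [mul_assoc, h1, ← mul_assoc, ← mul_assoc, ← map_mul, mul_comm, map_mul]
  quad r := by
    have hLR := pL_ne_pR r
    obtain ⟨Δ, hΔ, -⟩ := Delta_ex (K := K) (ℓ := ℓ) (κ := κ) he ht hLR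
    have h1 := hev.rel r _ _ (hΔ (θ (pL r) (pR r)))
    have h2 := hΔ (θ (pL r) (pR r))
    rw [theta_act hθ _ hLR, Equiv.swap_apply_left, Equiv.swap_apply_right] at h1 h2
    have h3 : -(1 + cst K n ℓ κ t) * θ (pR r) (pL r) + Δ (θ (pL r) (pR r)) =
        -(1 + cst K n ℓ κ t') := by
      funext w
      exact id_quad (xx_sub_ne ℓ κ t hLR w) (xx_sub_ne ℓ κ t' hLR w)
        (congrFun (hθ (pL r) (pR r)) w) (congrFun (hθ (pR r) (pL r)) w) (congrFun h2 w)
    have h4 : ev (Δ (θ (pL r) (pR r))) = (1 + algebraMap K H t) * ev (θ (pR r) (pL r)) -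
        (1 + algebraMap K H t') := by
      have := congrArg ev h3
      simp only [map_add, map_neg, map_mul, map_one, hev.c] at this
      linear_combination (norm := noncomm_ring) this
    rw [mul_assoc, ← mul_assoc (D r), h1, add_mul, mul_assoc (ev (θ (pR r) (pL r))), h.quad r, h4]
    simp only [← Algebra.smul_def, mul_add, add_mul, mul_sub, sub_mul, smul_mul_assoc,
      mul_smul_comm, mul_assoc, one_mul, Algebra.algebraMap_eq_smul_one, mul_one]
    module
  far r s hrs := by
    have key : ∀ r s : Fin (n - 1), (r.1 + 1 < s.1 ∨ s.1 + 1 < r.1) →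
        D r * ev (θ (pL s) (pR s)) = ev (θ (pL s) (pR s)) * D r := by
      intro r s hrs
      have hfix : act K n ℓ κ (Equiv.swap (pL r) (pR r)) (θ (pL s) (pR s)) =
          θ (pL s) (pR s) := by
        rw [theta_act hθ _ (pL_ne_pR s), Equiv.swap_apply_of_ne_of_ne,
          Equiv.swap_apply_of_ne_of_ne] <;> simp only [pL, pR, ne_eq, Fin.mk.injEq] <;> omega
      have h1 := hev.rel r (θ (pL s) (pR s)) 0 (by rw [hfix]; ring)
      rwa [hfix, map_zero, add_zero] at h1
    have k1 := key r s hrs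
    have k2 := key s r hrs.symm
    have k3 : ev (θ (pL r) (pR r)) * ev (θ (pL s) (pR s)) =
      ev (θ (pL s) (pR s)) * ev (θ (pL r) (pR r)) := by rw [← map_mul, mul_comm, map_mul]
    have k4 := h.far r s hrs
    calc ev (θ (pL r) (pR r)) * D r * (ev (θ (pL s) (pR s)) * D s)
        = ev (θ (pL r) (pR r)) * (D r * ev (θ (pL s) (pR s))) * D s := by noncomm_ring
      _ = (ev (θ (pL r) (pR r)) * ev (θ (pL s) (pR s))) * (D r * D s) := by
        rw [k1]; noncomm_ring
      _ = ev (θ (pL s) (pR s)) * (ev (θ (pL r) (pR r)) * D s) * D r := by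
        rw [k3, k4]; noncomm_ring
      _ = _ := by rw [← k2]; noncomm_ring
  braid r s hrs := by
    have hp : pL s = pR r := by apply Fin.ext; simp only [pL, pR]; exact hrs
    have h12 := pL_ne_pR r
    have h23 := pL_ne_pR s
    have h13 : pL r ≠ pR s := by
      intro hh; have := congrArg Fin.val hh; simp only [pL, pR] at this; omega
    obtain ⟨Δ1, hΔ1, -⟩ := Delta_ex (K := K) (ℓ := ℓ) (κ := κ) he ht h12
    obtain ⟨Δ2, hΔ2, -⟩ := Delta_ex (K := K) (ℓ := ℓ) (κ := κ) he ht h23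
    have r1 := fun f => hev.rel r _ _ (hΔ1 f)
    have r2 := fun f => hev.rel s _ _ (hΔ2 f)
    have q1 := h.quad r
    have q2 := h.quad s
    have hb := h.braid r s hrs
    rw [hp] at *
    generalize pL r = i at *
    generalize pR r = j at *
    generalize pR s = k at *
    generalize D r = D1 at *
    generalize D s = D2 at *
    have s1i : Equiv.swap i j i = j := Equiv.swap_apply_left _ _
    have s1j : Equiv.swap i j j = i := Equiv.swap_apply_right _ _
    have s1k : Equiv.swap i j k = k := Equiv.swap_apply_of_ne_of_ne h13.symm h23.symm
    have s2j : Equiv.swap j k j = k := Equiv.swap_apply_left _ _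
    have s2k : Equiv.swap j k k = j := Equiv.swap_apply_right _ _
    have s2i : Equiv.swap j k i = i := Equiv.swap_apply_of_ne_of_ne h12 h13
    have A1c : act K n ℓ κ (Equiv.swap i j) (θ j k) = θ i k := by
      rw [theta_act hθ _ h23, s1j, s1k]
    have A1b : act K n ℓ κ (Equiv.swap i j) (θ i k) = θ j k := by
      rw [theta_act hθ _ h13, s1i, s1k]
    have A1a : act K n ℓ κ (Equiv.swap i j) (θ i j) = θ j i := by
      rw [theta_act hθ _ h12, s1i, s1j]
    have A2a : act K n ℓ κ (Equiv.swap j k) (θ i j) = θ i k := by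
      rw [theta_act hθ _ h12, s2i, s2j]
    have A2b : act K n ℓ κ (Equiv.swap j k) (θ i k) = θ i j := by
      rw [theta_act hθ _ h13, s2i, s2k]
    have A2c : act K n ℓ κ (Equiv.swap j k) (θ j k) = θ k j := by
      rw [theta_act hθ _ h23, s2j, s2k]
    have hα := hΔ1 (θ j k)
    have hβ := hΔ2 (θ i j)
    rw [A1c] at hα
    rw [A2a] at hβ
    have hα' : Δ1 (θ i k) = -Δ1 (θ j k) := by
      apply xx_cancel t h12
      rw [hΔ1, A1b]
      linear_combination hα
    have hβ' : Δ2 (θ i k) = -Δ2 (θ i j) := by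
      apply xx_cancel t h23
      rw [hΔ2, A2b]
      linear_combination hβ
    have hβ1 := congrArg (act K n ℓ κ (Equiv.swap i j)) hβ
    have hγ1 := congrArg (act K n ℓ κ (Equiv.swap j k)) hα
    simp only [map_mul, map_sub, act_xx, act_cst, A1a, A1b, s1i, s1j, s1k] at hβ1
    simp only [map_mul, map_sub, act_xx, act_cst, A2b, A2c, s2i, s2j, s2k] at hγ1
    have hβ2 := hΔ1 (Δ2 (θ i j))
    have hγ2 := hΔ2 (Δ1 (θ j k))
    have I1 : -(1 + cst K n ℓ κ t) * (θ i k * act K n ℓ κ (Equiv.swap i j) (Δ2 (θ i j))) +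
        θ i k * Δ1 (Δ2 (θ i j)) + Δ1 (θ j k) * Δ2 (θ i j) =
        cst K n ℓ κ t' - cst K n ℓ κ t * (θ i k * θ j k) := by
      funext w
      exact id_braid (xx_sub_ne ℓ κ t h12 w) (xx_sub_ne ℓ κ t' h12 w) (xx_sub_ne ℓ κ t h23 w)
        (xx_sub_ne ℓ κ t' h23 w) (xx_sub_ne ℓ κ t h13 w) (xx_sub_ne ℓ κ t' h13 w)
        (congrFun (hθ i j) w) (congrFun (hθ i k) w) (congrFun (hθ j k) w) (congrFun (hθ j i) w)
        (congrFun hα w) (congrFun hβ w) (congrFun hβ1 w) (congrFun hβ2 w)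
    have I2 : -(1 + cst K n ℓ κ t) * (θ i k * act K n ℓ κ (Equiv.swap j k) (Δ1 (θ j k))) +
        θ i k * Δ2 (Δ1 (θ j k)) + Δ2 (θ i j) * Δ1 (θ j k) =
        cst K n ℓ κ t' - cst K n ℓ κ t * (θ i k * θ i j) := by
      funext w
      exact id_braid' (xx_sub_ne ℓ κ t h12 w) (xx_sub_ne ℓ κ t' h12 w) (xx_sub_ne ℓ κ t h23 w)
        (xx_sub_ne ℓ κ t' h23 w) (xx_sub_ne ℓ κ t h13 w) (xx_sub_ne ℓ κ t' h13 w)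
        (congrFun (hθ i j) w) (congrFun (hθ i k) w) (congrFun (hθ j k) w) (congrFun (hθ k j) w)
        (congrFun hα w) (congrFun hβ w) (congrFun hγ1 w) (congrFun hγ2 w)
    have g1 : D1 * ev (θ j k) = ev (θ i k) * D1 + ev (Δ1 (θ j k)) := by rw [r1, A1c]
    have g2 : D1 * ev (θ i k) = ev (θ j k) * D1 - ev (Δ1 (θ j k)) := by
      rw [r1, A1b, hα', map_neg, sub_eq_add_neg]
    have g3 : D2 * ev (θ i j) = ev (θ i k) * D2 + ev (Δ2 (θ i j)) := by rw [r2, A2a]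
    have g4 : D2 * ev (θ i k) = ev (θ i j) * D2 - ev (Δ2 (θ i j)) := by
      rw [r2, A2b, hβ', map_neg, sub_eq_add_neg]
    have B1 := braid_half ev (cst K n ℓ κ) hev.c D1 D2 _ _ _ _ _ _ _ (t : K) (t' : K) g1 g2 g3
      (r1 (Δ2 (θ i j))) q1 I1
    have B2 := braid_half ev (cst K n ℓ κ) hev.c D2 D1 _ _ _ _ _ _ _ (t : K) (t' : K) g3 g4 g1
      (r2 (Δ1 (θ j k))) q2 I2
    rw [B1, B2, hb]
    congr 2
    ring
  cyc hn := by
    have h0 := h.cyc hn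
    have hc : ∀ l, ∃ g : RR K n ℓ κ, l < ℓ → xx ℓ κ t' ⟨0, hn⟩ - cst K n ℓ κ (tp t' (κ l)) =
        g * (xx ℓ κ t ⟨0, hn⟩ - cst K n ℓ κ (tp t (κ l))) := by
      intro l
      by_cases hl : l < ℓ
      · obtain ⟨g, hg⟩ := cyc_ex (K := K) he t' ht ⟨0, hn⟩ hl
        exact ⟨g, fun _ => hg⟩
      · exact ⟨0, fun h => absurd h hl⟩
    choose g hg using hc
    have e1 : ((List.range ℓ).map fun l => ev (xx ℓ κ t' ⟨0, hn⟩) -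
        algebraMap K H (tp t' (κ l))) = ((List.range ℓ).map fun l =>
          g l * (xx ℓ κ t ⟨0, hn⟩ - cst K n ℓ κ (tp t (κ l)))).map ev := by
      rw [List.map_map]
      apply List.map_congr_left
      intro l hl
      rw [Function.comp_apply, ← hg l (List.mem_range.1 hl), map_sub, hev.c]
    have e2 : ((List.range ℓ).map fun l => Y ⟨0, hn⟩ - algebraMap K H (tp t (κ l))) =
        ((List.range ℓ).map fun l => xx ℓ κ t ⟨0, hn⟩ - cst K n ℓ κ (tp t (κ l))).map ev := by
      rw [List.map_map]
      apply List.map_congr_left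
      intro l hl
      rw [Function.comp_apply, map_sub, hev.c, hev.x]
    rw [e2, ← map_list_prod] at h0
    rw [e1, ← map_list_prod, List.prod_map_mul, map_mul, h0, mul_zero]

end transfer

end LE
end Paper

namespace Paper
namespace LE

section final

variable {K : Type} [Field K] {n ℓ : ℕ} {κ : ℕ → ℤ} {e : ℕ}

/-- The alternative generators. -/
noncomputable def Xg (ℓ : ℕ) (κ : ℕ → ℤ) (t : Kˣ) (k : Fin n) : CycHecke K t n ℓ κ :=
  1 + ((t : K) - 1) • Lgen K t n ℓ κ k

/-- The alternative generators. -/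
noncomputable def Dg (ℓ : ℕ) (κ : ℕ → ℤ) (t : Kˣ) (r : Fin (n - 1)) : CycHecke K t n ℓ κ :=
  Tgen K t n ℓ κ r - algebraMap K _ (t : K)

lemma half (hℓ : 1 ≤ ℓ) (he : ∀ k l, k < ℓ → l < ℓ → (n : ℤ) + κ k - κ l < (e : ℤ))
    {t t' : Kˣ} (ht : Good e t) (ht' : Good e t') (h1' : (t' : K) - 1 ≠ 0)
    {ev : RR K n ℓ κ →+* CycHecke K t n ℓ κ} {N : ℕ} (hev : EV t (Xg ℓ κ t) (Dg ℓ κ t) ev N)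
    {ev' : RR K n ℓ κ →+* CycHecke K t' n ℓ κ} {N' : ℕ}
    (hev' : EV t' (Xg ℓ κ t') (Dg ℓ κ t') ev' N')
    {θ : Fin n → Fin n → RR K n ℓ κ} (hθ : IsTheta t t' θ) :
    ∃ Φ : CycHecke K t' n ℓ κ →ₐ[K] CycHecke K t n ℓ κ, (∀ f, Φ (ev' f) = ev f) ∧
      ∀ r, Φ (Dg ℓ κ t' r) = ev (θ (pL r) (pR r)) * Dg ℓ κ t r := by
  obtain ⟨Φ, hX, hD⟩ := hom_of_ahd h1' (ahd_transfer he ht (ahd_gens t) hev hθ)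
  refine ⟨Φ, ?_, hD⟩
  have hle : mO K n ^ (N + N') ≤ mO K n ^ N := Ideal.pow_le_pow_right (Nat.le_add_right N N')
  have hle' : mO K n ^ (N + N') ≤ mO K n ^ N' := Ideal.pow_le_pow_right (Nat.le_add_left N' N)
  refine dens_induction hℓ he ht' (N + N') (p := fun f => Φ (ev' f) = ev f) ?_ ?_ ?_ ?_ ?_
  · intro a
    rw [hev'.c, hev.c, AlgHom.commutes]
  · intro k
    rw [hev'.x]
    exact hX k
  · intro f g hf hg
    simp only [map_add, hf, hg]
  · intro f g hf hg
    simp only [map_mul, hf, hg]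
  · intro f hf
    rw [hev'.van f (fun w => hle' (hf w)), hev.van f (fun w => hle (hf w)), map_zero]

lemma inv_half {t t' : Kˣ} (h1 : (t : K) - 1 ≠ 0)
    {ev : RR K n ℓ κ →+* CycHecke K t n ℓ κ} {N : ℕ} (hev : EV t (Xg ℓ κ t) (Dg ℓ κ t) ev N)
    {ev' : RR K n ℓ κ →+* CycHecke K t' n ℓ κ}
    {θ θ' : Fin n → Fin n → RR K n ℓ κ} (hθ : IsTheta t t' θ) (hθ' : IsTheta t' t θ')
    {Φ : CycHecke K t' n ℓ κ →ₐ[K] CycHecke K t n ℓ κ}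
    {Ψ : CycHecke K t n ℓ κ →ₐ[K] CycHecke K t' n ℓ κ}
    (a1 : ∀ f, Φ (ev' f) = ev f)
    (a2 : ∀ r, Φ (Dg ℓ κ t' r) = ev (θ (pL r) (pR r)) * Dg ℓ κ t r)
    (b1 : ∀ f, Ψ (ev f) = ev' f)
    (b2 : ∀ r, Ψ (Dg ℓ κ t r) = ev' (θ' (pL r) (pR r)) * Dg ℓ κ t' r) :
    Φ.comp Ψ = AlgHom.id K _ := by
  apply hom_ext_gens h1
  · intro k
    change Φ (Ψ (Xg ℓ κ t k)) = Xg ℓ κ t k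
    rw [← hev.x, b1, a1]
  · intro r
    change Φ (Ψ (Dg ℓ κ t r)) = Dg ℓ κ t r
    rw [b2, map_mul, a1, a2, ← mul_assoc, ← map_mul, mul_comm (θ' _ _),
      theta_inv hθ hθ' (pL_ne_pR r), map_one, one_mul]

lemma iso_of_good (hℓ : 1 ≤ ℓ) (he : ∀ k l, k < ℓ → l < ℓ → (n : ℤ) + κ k - κ l < (e : ℤ))
    (he2 : 2 ≤ e) {t t' : Kˣ} (ht : Good e t) (ht' : Good e t') :
    Nonempty (CycHecke K t n ℓ κ ≃ₐ[K] CycHecke K t' n ℓ κ) := by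
  have key : ∀ {t : Kˣ}, Good e t → (t : K) - 1 ≠ 0 := by
    intro t ht h
    have h1 := ht 1 (by rw [zpow_one]; exact Units.ext (sub_eq_zero.1 h))
    have h2 := Int.le_of_dvd one_pos h1
    omega
  obtain ⟨ev, N, hev⟩ := EV_ex hℓ he ht (ahd_gens (n := n) (ℓ := ℓ) (κ := κ) t)
  obtain ⟨ev', N', hev'⟩ := EV_ex hℓ he ht' (ahd_gens (n := n) (ℓ := ℓ) (κ := κ) t')
  have hex : ∃ θ : Fin n → Fin n → RR K n ℓ κ, IsTheta t t' θ := by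
    choose θ hθ using theta_ex (K := K) (ℓ := ℓ) (κ := κ) he he2 ht ht'
    exact ⟨θ, hθ⟩
  have hex' : ∃ θ : Fin n → Fin n → RR K n ℓ κ, IsTheta t' t θ := by
    choose θ hθ using theta_ex (K := K) (ℓ := ℓ) (κ := κ) he he2 ht' ht
    exact ⟨θ, hθ⟩
  obtain ⟨θ, hθ⟩ := hex
  obtain ⟨θ', hθ'⟩ := hex'
  obtain ⟨Φ, a1, a2⟩ := half hℓ he ht ht' (key ht') hev hev' hθ
  obtain ⟨Ψ, b1, b2⟩ := half hℓ he ht' ht (key ht) hev' hev hθ'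
  exact ⟨AlgEquiv.ofAlgHom Ψ Φ (inv_half (key ht') hev' hθ' hθ b1 b2 a1 a2)
    (inv_half (key ht) hev hθ hθ' a1 a2 b1 b2)⟩

end final

lemma rel_zero (K : Type) [Field K] (t t' : Kˣ) (ℓ : ℕ) (κ : ℕ → ℤ) :
    HeckeRel K t 0 ℓ κ = HeckeRel K t' 0 ℓ κ := by
  have key : ∀ (t : Kˣ) x y, ¬ HeckeRel K t 0 ℓ κ x y := by
    intro t x y h
    cases h with
    | cyc h => exact absurd h (lt_irrefl 0)
    | quad r => exact r.elim0
    | LL k m => exact k.elim0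
    | TTfar r s h => exact r.elim0
    | braid r s h => exact r.elim0
    | TL r k h => exact k.elim0
    | LT r => exact r.elim0
  funext x y
  exact propext ⟨fun h => absurd h (key t x y), fun h => absurd h (key t' x y)⟩

end LE
end Paper

namespace Paper

/-- if `e > max{n + κ_k - κ_l}`, `ξ₀` is not a root of unity and `ξ_e`
is a primitive `e`-th root of unity, then `H_n(K, ξ₀, κ) ≅ H_n(K, ξ_e, κ)` as
`K`-algebras. -/
theorem large_e_isomorphism (n ℓ : ℕ) (hℓ : 1 ≤ ℓ) (κ : ℕ → ℤ) (e : ℕ)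
    (he : ∀ k l, k < ℓ → l < ℓ → (n : ℤ) + κ k - κ l < (e : ℤ))
    (K : Type) [Field K] (ξ₀ ξe : Kˣ)
    (h0 : ∀ d : ℕ, 0 < d → (ξ₀ : K) ^ d ≠ 1)
    (hε : IsPrimitiveRoot (ξe : K) e) :
    Nonempty (CycHecke K ξ₀ n ℓ κ ≃ₐ[K] CycHecke K ξe n ℓ κ) := by
  rcases Nat.eq_zero_or_pos n with hn | hn
  · subst hn
    unfold CycHecke
    rw [LE.rel_zero K ξ₀ ξe ℓ κ]
    exact ⟨AlgEquiv.refl⟩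
  · have he2 : 2 ≤ e := by
      have := he 0 0 hℓ hℓ
      omega
    refine LE.iso_of_good hℓ he he2 ?_ ?_
    · intro z hz
      have hnat : ∀ d : ℕ, ξ₀ ^ d = 1 → d = 0 := by
        intro d hd
        by_contra hne
        apply h0 d (Nat.pos_of_ne_zero hne)
        rw [← Units.val_pow_eq_pow_val, hd, Units.val_one]
      have hz0 : z.natAbs = 0 := by
        apply hnat
        rcases Int.natAbs_eq z with h | h
        · rw [h, zpow_natCast] at hz
          exact hz
        · rw [h, zpow_neg, zpow_natCast, inv_eq_one] at hz
          exact hz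
      rw [Int.natAbs_eq_zero.1 hz0]
      exact dvd_zero _
    · intro z hz
      exact ((IsPrimitiveRoot.coe_units_iff.1 hε).zpow_eq_one_iff_dvd z).1 hz

end Paper
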